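/- arXiv:1911.03297 — 10 statements merged into one kernel-verified Lean document; each statement's English description precedes it below -/
import Mathlib

section
/- Let G be a finite simple graph on n ≥ 1 vertices, let k ≥ 1 with k ∣ n, and let G′ be the graph obtained from G by adding a set D of n/k new vertices, where D is an independent set and every vertex of D is adjacent to every vertex of G. Then G admits an equitable k-coloring if and only if G′ admits an equitable (k+1)-coloring. -/
/-- `φ` is a proper coloring of the simple graph `G`. -/
def IsProperColoring {V : Type*} {k : ℕ} (G : SimpleGraph V) (φ : V → Fin k) : Prop :=
  ∀ u v : V, G.Adj u v → φ u ≠ φ v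

/-- Every color class of `φ` has size `⌊n/k⌋` or `⌈n/k⌉`, where `n` is the number of
vertices. -/
def IsEquitable {V : Type*} [Fintype V] {k : ℕ} (φ : V → Fin k) : Prop :=
  ∀ i : Fin k,
    (Finset.univ.filter fun v => φ v = i).card = Fintype.card V / k ∨
    (Finset.univ.filter fun v => φ v = i).card = (Fintype.card V + k - 1) / k

/-- The graph obtained from `G` by adding `m` new vertices forming an independent set `D`,
each of them adjacent to every vertex of `G`. -/
def addDominating {V : Type*} (G : SimpleGraph V) (m : ℕ) : SimpleGraph (V ⊕ Fin m) :=
  SimpleGraph.fromRel fun a b =>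
    match a, b with
    | Sum.inl u, Sum.inl v => G.Adj u v
    | Sum.inl _, Sum.inr _ => True
    | Sum.inr _, Sum.inl _ => True
    | Sum.inr _, Sum.inr _ => False

/-- If `k` divides the number of vertices, equitable means that all color classes have the
same size. -/
theorem isEquitable_iff_of_card_eq_mul {V : Type*} [Fintype V] {k m : ℕ} (hk : 1 ≤ k)
    (hV : Fintype.card V = k * m) (φ : V → Fin k) :
    IsEquitable φ ↔ ∀ i, (Finset.univ.filter fun v => φ v = i).card = m := by
  have hfloor : k * m / k = m := Nat.mul_div_cancel_left m hk
  have hceil : (k * m + k - 1) / k = m := by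
    rw [Nat.add_sub_assoc hk, Nat.mul_add_div hk, Nat.div_eq_of_lt (by omega), add_zero]
  simp only [IsEquitable, hV, hfloor, hceil, or_self]

/-- Color the new vertices with `c` and the old ones by `φ`, using the colors other than `c`. -/
def extendColoring {V : Type*} {k m : ℕ} (c : Fin (k + 1)) (φ : V → Fin k) :
    V ⊕ Fin m → Fin (k + 1) :=
  Sum.elim (fun v => c.succAbove (φ v)) (fun _ => c)

theorem isProperColoring_extendColoring_iff {V : Type*} {k m : ℕ} (G : SimpleGraph V)
    (c : Fin (k + 1)) (φ : V → Fin k) :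
    IsProperColoring (addDominating G m) (extendColoring c φ) ↔ IsProperColoring G φ := by
  constructor
  · intro h u v huv heq
    exact h (Sum.inl u) (Sum.inl v) (by simp [addDominating, huv, huv.ne])
      (by simp [extendColoring, heq])
  · rintro h (u | u) (v | v) huv
    · have huv' : G.Adj u v := by
        simp only [addDominating, SimpleGraph.fromRel_adj] at huv
        exact huv.2.elim id SimpleGraph.Adj.symm
      simpa [extendColoring] using h u v huv'
    · simp [extendColoring, Fin.succAbove_ne]
    · simp [extendColoring, Fin.ne_succAbove]
    · simp [addDominating] at huv

theorem isEquitable_extendColoring_iff {V : Type*} [Fintype V] {k m : ℕ} (hk : 1 ≤ k)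
    (hV : Fintype.card V = k * m) (c : Fin (k + 1)) (φ : V → Fin k) :
    IsEquitable (extendColoring (m := m) c φ) ↔ IsEquitable φ := by
  have hV' : Fintype.card (V ⊕ Fin m) = (k + 1) * m := by
    rw [Fintype.card_sum, hV, Fintype.card_fin, add_mul, one_mul]
  rw [isEquitable_iff_of_card_eq_mul hk hV, isEquitable_iff_of_card_eq_mul (by omega) hV',
    Fin.forall_iff_succAbove c]
  simp only [Finset.card_filter, Fintype.sum_sum_type]
  simp [extendColoring, Fin.succAbove_ne, Fin.ne_succAbove]

/-- Every equitable proper coloring of the extended graph gives all new vertices a common color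
that is used nowhere else. -/
theorem exists_eq_extendColoring {V : Type*} [Fintype V] {k m : ℕ} (hm : 0 < m)
    (hV : Fintype.card V = k * m) (G : SimpleGraph V) (ψ : V ⊕ Fin m → Fin (k + 1))
    (hproper : IsProperColoring (addDominating G m) ψ) (hequitable : IsEquitable ψ) :
    ∃ c φ, ψ = extendColoring c φ := by
  classical
  have hV' : Fintype.card (V ⊕ Fin m) = (k + 1) * m := by
    rw [Fintype.card_sum, hV, Fintype.card_fin, add_mul, one_mul]
  rw [isEquitable_iff_of_card_eq_mul (by omega) hV'] at hequitable
  set c := ψ (Sum.inr ⟨0, hm⟩)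
  have hold (v : V) : ψ (Sum.inl v) ≠ c :=
    hproper _ _ (by simp [addDominating])
  have hnew (d : Fin m) : ψ (Sum.inr d) = c := by
    have hcard := hequitable c
    simp only [Finset.card_filter, Fintype.sum_sum_type, hold, if_false,
      Finset.sum_const_zero, zero_add] at hcard
    rw [← Finset.card_filter] at hcard
    have huniv := (Finset.card_eq_iff_eq_univ _).1 (hcard.trans (Fintype.card_fin m).symm)
    have hd := Finset.mem_univ d
    rw [← huniv] at hd
    exact (Finset.mem_filter.1 hd).2
  choose φ hφ using fun v => Fin.exists_succAbove_eq (hold v)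
  refine ⟨c, φ, funext ?_⟩
  rintro (v | d)
  · exact (hφ v).symm
  · exact hnew d

/-- `G` admits an equitable `k`-coloring iff the graph obtained from `G` by adding an
independent set of `n/k` new universal vertices admits an equitable `(k+1)`-coloring. -/
theorem stmt1 {V : Type*} [Fintype V] (G : SimpleGraph V) (n k : ℕ)
    (hn : n = Fintype.card V) (hn1 : 1 ≤ n) (hk : 1 ≤ k) (hdvd : k ∣ n) :
    (∃ φ : V → Fin k, IsProperColoring G φ ∧ IsEquitable φ) ↔
    (∃ ψ : V ⊕ Fin (n / k) → Fin (k + 1),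
      IsProperColoring (addDominating G (n / k)) ψ ∧ IsEquitable ψ) := by
  obtain ⟨m, rfl⟩ := hdvd
  have hV : Fintype.card V = k * m := hn.symm
  have hm : 0 < m := Nat.pos_of_mul_pos_left hn1
  rw [Nat.mul_div_cancel_left m hk]
  constructor
  · rintro ⟨φ, hproper, hequitable⟩
    exact ⟨extendColoring (Fin.last k) φ,
      (isProperColoring_extendColoring_iff G _ φ).2 hproper,
      (isEquitable_extendColoring_iff hk hV _ φ).2 hequitable⟩
  · rintro ⟨ψ, hproper, hequitable⟩
    obtain ⟨c, φ, rfl⟩ := exists_eq_extendColoring hm hV G ψ hproper hequitable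
    exact ⟨φ, (isProperColoring_extendColoring_iff G c φ).1 hproper,
      (isEquitable_extendColoring_iff hk hV c φ).1 hequitable⟩
end

section
/- Let G be a finite simple graph on n vertices, let U ⊆ V(G) be such that G − U is a complete graph, and let k be an integer with k > |U|. Let m be the maximum size of a matching in the complement graph of G (equivalently, the maximum number of pairwise disjoint pairs {u, v} of vertices of G with uv ∉ E(G)). Then G admits an equitable k-coloring if and only if n ≤ k + m. -/
/-- A family of pairwise disjoint non-adjacent pairs of distinct vertices of `G`, that is, a
matching of the complement graph. -/
def IsNonadjMatching {V : Type*} (G : SimpleGraph V) {t : ℕ} (f : Fin t → V × V) : Prop :=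
  (∀ a : Fin t, (f a).1 ≠ (f a).2 ∧ ¬ G.Adj (f a).1 (f a).2) ∧
  (∀ a b : Fin t, a ≠ b →
    (f a).1 ≠ (f b).1 ∧ (f a).1 ≠ (f b).2 ∧
    (f a).2 ≠ (f b).1 ∧ (f a).2 ≠ (f b).2)

section

variable {V : Type*} [Fintype V] {G : SimpleGraph V} {k : ℕ}

/-- If `G` is complete outside `U`, a color class of a proper coloring avoiding `U` has at most
one vertex, and such a class exists once there are more than `|U|` colors. -/
theorem IsProperColoring.exists_card_class_le_one {U : Finset V} {φ : V → Fin k}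
    (hφ : IsProperColoring G φ)
    (hclique : ∀ u v : V, u ∉ U → v ∉ U → u ≠ v → G.Adj u v) (hk : U.card < k) :
    ∃ i, (Finset.univ.filter fun v => φ v = i).card ≤ 1 := by
  classical
  obtain ⟨i, hi⟩ : ∃ i, i ∉ U.image φ := by
    by_contra! h
    have hle := Finset.card_le_card (fun i _ => h i : Finset.univ ⊆ U.image φ)
    have himage := Finset.card_image_le (s := U) (f := φ)
    simp only [Finset.card_univ, Fintype.card_fin] at hle
    omega
  have hU : ∀ v, φ v = i → v ∉ U := fun v hv hvU => hi (Finset.mem_image.2 ⟨v, hvU, hv⟩)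
  refine ⟨i, Finset.card_le_one.2 fun u hu v hv => ?_⟩
  simp only [Finset.mem_filter, Finset.mem_univ, true_and] at hu hv
  by_contra huv
  exact hφ u v (hclique u v (hU u hu) (hU v hv) huv) (hu.trans hv.symm)

/-- If some class of an equitable coloring has at most one vertex, every class has at most two. -/
theorem IsEquitable.card_class_le_two {φ : V → Fin k} (hφ : IsEquitable φ)
    (h : ∃ i, (Finset.univ.filter fun v => φ v = i).card ≤ 1) (j : Fin k) :
    (Finset.univ.filter fun v => φ v = j).card ≤ 2 := by
  obtain ⟨i, hi⟩ := h
  have hk : 0 < k := i.pos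
  have hceil : (Fintype.card V + k - 1) / k ≤ Fintype.card V / k + 1 := by
    rw [← Nat.add_div_right _ hk]
    exact Nat.div_le_div_right (by omega)
  have hfloor : Fintype.card V / k ≤ (Fintype.card V + k - 1) / k :=
    Nat.div_le_div_right (by omega)
  have hi' := hφ i
  have hj := hφ j
  omega

/-- The two-element classes of a proper coloring with classes of size at most two form a matching
of the complement graph. -/
theorem IsProperColoring.exists_nonadjMatching {φ : V → Fin k} (hφ : IsProperColoring G φ)
    (h : ∀ i, (Finset.univ.filter fun v => φ v = i).card ≤ 2) :
    ∃ t, Fintype.card V ≤ k + t ∧ ∃ f : Fin t → V × V, IsNonadjMatching G f := by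
  classical
  set T := Finset.univ.filter fun i => (Finset.univ.filter fun v => φ v = i).card = 2 with hT
  refine ⟨T.card, ?_, ?_⟩
  · calc Fintype.card V = ∑ i, (Finset.univ.filter fun v => φ v = i).card :=
          Finset.card_eq_sum_card_fiberwise (fun v _ => Finset.mem_univ (φ v))
      _ ≤ ∑ i, (1 + if (Finset.univ.filter fun v => φ v = i).card = 2 then 1 else 0) := by
          refine Finset.sum_le_sum fun i _ => ?_
          have hi := h i
          split_ifs <;> omega
      _ = k + T.card := by
          rw [Finset.sum_add_distrib, ← Finset.card_filter]
          simp [hT]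
  · have hpair : ∀ i : T, ∃ p : V × V, p.1 ≠ p.2 ∧ φ p.1 = i ∧ φ p.2 = i := by
      rintro ⟨i, hi⟩
      obtain ⟨x, y, hxy, hclass⟩ := Finset.card_eq_two.1 (Finset.mem_filter.1 hi).2
      have hmem : ∀ v, v ∈ ({x, y} : Finset V) → φ v = i := fun v hv => by
        rw [← hclass] at hv
        exact (Finset.mem_filter.1 hv).2
      exact ⟨(x, y), hxy, hmem x (by simp), hmem y (by simp)⟩
    choose p hne hfst hsnd using hpair
    refine ⟨fun a => p (T.equivFin.symm a), fun a => ⟨hne _, fun hadj => ?_⟩, fun a b hab => ?_⟩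
    · exact hφ _ _ hadj ((hfst _).trans (hsnd _).symm)
    · have hcolor : ((T.equivFin.symm a : T) : Fin k) ≠ (T.equivFin.symm b : T) := fun h =>
        hab (T.equivFin.symm.injective (Subtype.ext h))
      refine ⟨?_, ?_, ?_, ?_⟩ <;> intro heq <;> apply hcolor
      · rw [← hfst, ← hfst, heq]
      · rw [← hfst, ← hsnd, heq]
      · rw [← hsnd, ← hfst, heq]
      · rw [← hsnd, ← hsnd, heq]

/-- An injective coloring is proper and equitable. -/
theorem exists_equitable_of_card_le (G : SimpleGraph V) (h : Fintype.card V ≤ k) :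
    ∃ φ : V → Fin k, IsProperColoring G φ ∧ IsEquitable φ := by
  classical
  obtain ⟨φ⟩ : Nonempty (V ↪ Fin k) :=
    Function.Embedding.nonempty_of_card_le (by simpa using h)
  refine ⟨φ, fun u v hadj heq => hadj.ne (φ.injective heq), fun i => ?_⟩
  have hle : (Finset.univ.filter fun v => φ v = i).card ≤ 1 := Finset.card_le_one.2 <| by
    simp only [Finset.mem_filter, Finset.mem_univ, true_and]
    exact fun u hu v hv => φ.injective (hu.trans hv.symm)
  have hk : 0 < k := i.pos
  rcases h.eq_or_lt with heq | hlt
  · have hbij : Function.Bijective φ :=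
      (Fintype.bijective_iff_injective_and_card φ).2 ⟨φ.injective, by simpa using heq⟩
    obtain ⟨v, hv⟩ := hbij.2 i
    have hpos : 0 < (Finset.univ.filter fun v => φ v = i).card :=
      Finset.card_pos.2 ⟨v, by simpa using hv⟩
    left
    rw [heq, Nat.div_self hk]
    omega
  · rcases Nat.eq_zero_or_pos (Finset.univ.filter fun v => φ v = i).card with hzero | hpos
    · left
      rw [hzero, Nat.div_eq_of_lt hlt]
    · right
      have hcard : 0 < Fintype.card V := hpos.trans_le (Finset.card_le_univ _)
      rw [Nat.div_eq_of_lt_le (k := 1) (by omega) (by omega)]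
      omega

/-- A coloring all of whose classes have one or two vertices is equitable. -/
theorem isEquitable_of_card_class {φ : V → Fin k}
    (hpos : ∀ i, 0 < (Finset.univ.filter fun v => φ v = i).card)
    (hle : ∀ i, (Finset.univ.filter fun v => φ v = i).card ≤ 2) : IsEquitable φ := by
  intro i
  have hk : 0 < k := i.pos
  have hsum : Fintype.card V = ∑ i, (Finset.univ.filter fun v => φ v = i).card :=
    Finset.card_eq_sum_card_fiberwise (fun v _ => Finset.mem_univ (φ v))
  have hposi := hpos i
  have hlei := hle i
  have hge : k ≤ Fintype.card V := by
    rw [hsum]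
    simpa using Finset.sum_le_sum fun j (_ : j ∈ Finset.univ) => Nat.succ_le_of_lt (hpos j)
  by_cases hone : (Finset.univ.filter fun v => φ v = i).card = 1
  · left
    have hlt : Fintype.card V < 2 * k := by
      have := Finset.sum_lt_sum (fun j (_ : j ∈ Finset.univ) => hle j)
        ⟨i, Finset.mem_univ i, by omega⟩
      rw [hsum]
      simpa [mul_comm] using this
    rw [Nat.div_eq_of_lt_le (k := 1) (by omega) (by omega)]
    omega
  · right
    have hgt : k < Fintype.card V := by
      have := Finset.sum_lt_sum
        (fun j (_ : j ∈ Finset.univ) => Nat.succ_le_of_lt (hpos j))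
        ⟨i, Finset.mem_univ i, by omega⟩
      rw [hsum]
      simpa using this
    have hle' : Fintype.card V ≤ 2 * k := by
      rw [hsum]
      simpa [mul_comm] using Finset.sum_le_sum fun j (_ : j ∈ Finset.univ) => hle j
    rw [Nat.div_eq_of_lt_le (k := 2) (by omega) (by omega)]
    omega

/-- Merging the pairs of a matching of size `t` of the complement graph yields an equitable
coloring with `n - t` colors. -/
theorem IsNonadjMatching.exists_equitable {t : ℕ} {f : Fin t → V × V}
    (hf : IsNonadjMatching G f) (hcard : Fintype.card V = k + t) :
    ∃ φ : V → Fin k, IsProperColoring G φ ∧ IsEquitable φ := by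
  classical
  obtain ⟨hpair, hdisj⟩ := hf
  have hinj : Function.Injective fun a => (f a).2 := fun a b h => by
    by_contra hab
    exact (hdisj a b hab).2.2.2 h
  let R := {v : V // v ∉ Finset.univ.image fun a => (f a).2}
  have hcardR : Fintype.card R = Fintype.card (Fin k) := by
    rw [Fintype.card_subtype_compl, Fintype.card_coe,
      Finset.card_image_of_injective _ hinj]
    simp [hcard]
  have hfst : ∀ a, (f a).1 ∉ Finset.univ.image fun a => (f a).2 := by
    intro a ha
    obtain ⟨b, -, hb⟩ := Finset.mem_image.1 ha
    by_cases hab : a = b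
    · subst hab
      exact (hpair a).1 hb.symm
    · exact (hdisj a b hab).2.1 hb.symm
  have hrep : ∀ v : V, ∃ r : R, v = r ∨ ∃ a, v = (f a).2 ∧ (r : V) = (f a).1 := by
    intro v
    by_cases hv : v ∈ Finset.univ.image fun a => (f a).2
    · obtain ⟨a, -, ha⟩ := Finset.mem_image.1 hv
      exact ⟨⟨(f a).1, hfst a⟩, Or.inr ⟨a, ha.symm, rfl⟩⟩
    · exact ⟨⟨v, hv⟩, Or.inl rfl⟩
  choose r hr using hrep
  have hr_self : ∀ x : R, r x = x := by
    intro x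
    rcases hr x with h | ⟨a, ha, -⟩
    · exact Subtype.ext h.symm
    · exact absurd (Finset.mem_image.2 ⟨a, Finset.mem_univ a, ha.symm⟩) x.2
  have hmate : ∀ a b, (f a).1 = (f b).1 → a = b := fun a b h => by
    by_contra hab
    exact (hdisj a b hab).1 h
  let e : R ≃ Fin k := Fintype.equivOfCardEq hcardR
  refine ⟨fun v => e (r v), ?_, isEquitable_of_card_class ?_ ?_⟩
  · intro u v hadj heq
    have huv : (r u : V) = r v := congrArg Subtype.val (e.injective heq)
    rcases hr u with hu | ⟨a, hu, hua⟩ <;> rcases hr v with hv | ⟨b, hv, hvb⟩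
    · exact hadj.ne (hu.trans (huv.trans hv.symm))
    · rw [hu, huv, hvb, hv] at hadj
      exact (hpair b).2 hadj
    · rw [hv, ← huv, hua, hu] at hadj
      exact (hpair a).2 hadj.symm
    · obtain rfl := hmate a b (by rw [← hua, huv, hvb])
      exact hadj.ne (hu.trans hv.symm)
  · intro i
    exact Finset.card_pos.2 ⟨(e.symm i : R), by simp [hr_self]⟩
  · intro i
    have hsub : ∃ w : V, (Finset.univ.filter fun v => e (r v) = i) ⊆ {(e.symm i : V), w} := by
      by_cases hi : ∃ a, (e.symm i : V) = (f a).1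
      · obtain ⟨a, ha⟩ := hi
        refine ⟨(f a).2, fun v hv => ?_⟩
        have hrv : r v = e.symm i := by
          rw [Equiv.eq_symm_apply]
          exact (Finset.mem_filter.1 hv).2
        have hv' := hr v
        rw [hrv] at hv'
        rcases hv' with h | ⟨b, hvb, hb⟩
        · simp [h]
        · obtain rfl := hmate a b (ha.symm.trans hb)
          simp [hvb]
      · refine ⟨(e.symm i : V), fun v hv => ?_⟩
        have hrv : r v = e.symm i := by
          rw [Equiv.eq_symm_apply]
          exact (Finset.mem_filter.1 hv).2
        have hv' := hr v
        rw [hrv] at hv'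
        rcases hv' with h | ⟨b, -, hb⟩
        · simp [h]
        · exact absurd ⟨b, hb⟩ hi
    obtain ⟨w, hw⟩ := hsub
    exact (Finset.card_le_card hw).trans Finset.card_le_two

end

/-- If `G − U` is a complete graph, `k > |U|`, and `m` is the maximum number of pairwise
disjoint non-adjacent pairs of vertices of `G` (i.e. the maximum size of a matching of the
complement graph), then `G` has an equitable `k`-coloring iff `n ≤ k + m`. -/
theorem stmt3 {V : Type*} [Fintype V] [DecidableEq V] (G : SimpleGraph V)
    (U : Finset V) (k m : ℕ)
    (hclique : ∀ u v : V, u ∉ U → v ∉ U → u ≠ v → G.Adj u v)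
    (hk : U.card < k)
    (hm : IsGreatest {t : ℕ | ∃ f : Fin t → V × V,
        (∀ a : Fin t, (f a).1 ≠ (f a).2 ∧ ¬ G.Adj (f a).1 (f a).2) ∧
        (∀ a b : Fin t, a ≠ b →
          (f a).1 ≠ (f b).1 ∧ (f a).1 ≠ (f b).2 ∧
          (f a).2 ≠ (f b).1 ∧ (f a).2 ≠ (f b).2)} m) :
    (∃ φ : V → Fin k, IsProperColoring G φ ∧ IsEquitable φ) ↔
    Fintype.card V ≤ k + m := by
  obtain ⟨⟨f, hf⟩, hmax⟩ := hm
  constructor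
  · rintro ⟨φ, hproper, hequit⟩
    obtain ⟨t, ht, g, hg⟩ := hproper.exists_nonadjMatching
      (hequit.card_class_le_two (hproper.exists_card_class_le_one hclique hk))
    have htm : t ≤ m := hmax ⟨g, hg⟩
    omega
  · intro hn
    rcases le_or_gt (Fintype.card V) k with hle | hlt
    · exact exists_equitable_of_card_le G hle
    · have htm : Fintype.card V - k ≤ m := by omega
      have hg : IsNonadjMatching G fun a : Fin (Fintype.card V - k) => f (Fin.castLE htm a) :=
        ⟨fun a => hf.1 _, fun a b hab => hf.2 _ _ fun h => hab (Fin.castLE_injective htm h)⟩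
      exact hg.exists_equitable (by omega)
end

section
/- Let k ≥ 3, let G be a finite simple graph, and let P = {w_1, …, w_p} be a pendant path of G with p ≥ k + 2 vertices; set Q = V(G) \ P. Let φ be a proper k-coloring of the subgraph of G induced by Q that is α-balanced. Then φ can be extended to a proper k-coloring φ* of G (agreeing with φ on Q) that is α*-balanced for some α* ≤ α + 1; moreover, if α ≥ 1 then α* ≤ α (i.e., α* = α + 1 is possible only when α = 0). -/
/-- `w` enumerates (injectively) a pendant path of `G`: the edges of `G` incident to the
vertices `w 0, …, w (p-1)` are exactly the consecutive path edges together with exactly one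
edge from `w 0` to a vertex `u` outside the path and exactly one edge from `w (p-1)` to a
vertex `v` outside the path. -/
def IsPendantPath {V : Type*} {p : ℕ} (G : SimpleGraph V) (w : Fin p → V) : Prop :=
  Function.Injective w ∧
  ∃ u v : V, u ∉ Set.range w ∧ v ∉ Set.range w ∧
    ∀ (i : Fin p) (b : V),
      G.Adj (w i) b ↔
        ((∃ j : Fin p, b = w j ∧ (i.val + 1 = j.val ∨ j.val + 1 = i.val)) ∨
          (i.val = 0 ∧ b = u) ∨ (i.val = p - 1 ∧ b = v))

/-- The balance of the `k`-coloring `φ` on the vertex set `S`: the difference between the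
largest and the smallest size of a color class within `S`. -/
def balanceOn {V : Type*} {k : ℕ} (S : Finset V) (φ : V → Fin k) : ℕ :=
  Finset.univ.sup fun ij : Fin k × Fin k =>
    (S.filter fun v => φ v = ij.1).card - (S.filter fun v => φ v = ij.2).card

/-- With at least three colors, the colors can be listed without repetition so that the list
avoids `a` at its start and `b` at its end. -/
theorem exists_enumeration_isChain_ne {k : ℕ} (hk : 3 ≤ k) (a b : Fin k) :
    ∃ l : List (Fin k), l.length = k ∧ (∀ c, l.count c = 1) ∧
      (a :: (l ++ [b])).IsChain (· ≠ ·) := by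
  obtain ⟨x, hx⟩ : ∃ x : Fin k, x ∉ ({a} : Finset (Fin k)) := by
    by_contra! h
    have := Finset.card_le_card (fun c _ => h c : Finset.univ ⊆ ({a} : Finset (Fin k)))
    simp at this
    omega
  obtain ⟨y, hy⟩ : ∃ y : Fin k, y ∉ ({x, b} : Finset (Fin k)) := by
    by_contra! h
    have := Finset.card_le_card (fun c _ => h c : Finset.univ ⊆ ({x, b} : Finset (Fin k)))
    have := Finset.card_le_two (a := x) (b := b)
    simp at *
    omega
  simp only [Finset.mem_singleton, Finset.mem_insert, not_or] at hx hy
  set m := ((Finset.univ.erase x).erase y).toList with hm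
  have hnodup : (x :: (m ++ [y])).Nodup := by
    simp [hm, List.nodup_append, Finset.nodup_toList, Ne.symm hy.1]
    tauto
  have hcount : ∀ c, (x :: (m ++ [y])).count c = 1 := fun c =>
    List.count_eq_one_of_mem hnodup (by simp [hm]; tauto)
  refine ⟨x :: (m ++ [y]), ?_, hcount, ?_⟩
  · have : (x :: (m ++ [y])).toFinset = Finset.univ := by
      ext c
      simp [hm]
      tauto
    rw [← List.toFinset_card_of_nodup hnodup, this, Finset.card_fin]
  · have hchain : (x :: (m ++ [y])).IsChain (· ≠ ·) := hnodup.isChain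
    rw [List.isChain_cons]
    refine ⟨by simpa using Ne.symm hx, ?_⟩
    rw [List.isChain_append]
    refine ⟨hchain, by simp, ?_⟩
    rw [← List.cons_append, List.getLast?_concat]
    simpa using hy.2

/-- There are `r` indices whose values are at most those of the other indices. -/
theorem exists_finset_card_eq_forall_le {ι : Type*} [Fintype ι] [DecidableEq ι] (n : ι → ℕ)
    (r : ℕ) (hr : r ≤ Fintype.card ι) :
    ∃ T : Finset ι, T.card = r ∧ ∀ i ∈ T, ∀ j ∉ T, n i ≤ n j := by
  induction r with
  | zero => exact ⟨∅, by simp⟩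
  | succ r ih =>
    obtain ⟨T, hT, hle⟩ := ih (by omega)
    have hne : Tᶜ.Nonempty := by
      rw [← Finset.card_pos, Finset.card_compl]
      omega
    obtain ⟨x, hx, hmin⟩ := Finset.exists_min_image Tᶜ n hne
    refine ⟨insert x T, by rw [Finset.card_insert_of_notMem (by simpa using hx), hT], ?_⟩
    intro i hi j hj
    simp only [Finset.mem_insert, not_or] at hi hj
    rcases hi with rfl | hi
    · exact hmin j (by simpa using hj.2)
    · exact hle i hi j hj.2

/-- A set of at least two elements can be listed without repetition so that a given element does
not come last. -/
theorem Finset.exists_list_concat_isChain_ne {ι : Type*} [DecidableEq ι] (T : Finset ι)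
    (hT : 2 ≤ T.card) (b : ι) :
    ∃ l : List ι, l.Nodup ∧ l.toFinset = T ∧ (l ++ [b]).IsChain (· ≠ ·) := by
  obtain ⟨x, hx, hxb⟩ : ∃ x ∈ T, x ≠ b := Finset.exists_mem_ne (by omega) b
  have hnodup : ((T.erase x).toList ++ [x]).Nodup := by
    simp [List.nodup_append, Finset.nodup_toList]
    grind
  refine ⟨(T.erase x).toList ++ [x], hnodup, ?_, ?_⟩
  · ext c
    simp
    grind
  · rw [List.isChain_append]
    exact ⟨hnodup.isChain, by simp, by simpa using hxb⟩

theorem List.IsChain.append_cons_overlap {ι : Type*} {R : ι → ι → Prop} {a s : ι} {l m : List ι}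
    (h₁ : (a :: (l ++ [s])).IsChain R) (h₂ : (s :: m).IsChain R) :
    (a :: (l ++ s :: m)).IsChain R := by
  have := List.IsChain.append_overlap (l₁ := a :: l) (l₂ := [s]) (l₃ := m)
    (by simpa using h₁) (by simpa using h₂) (by simp)
  simpa using this

/-- A path of `p ≥ k + 2` vertices between two precolored vertices can be properly colored so that
the differences of the color class sizes stay bounded by `M ≥ 1`. -/
theorem exists_balanced_path_coloring {k : ℕ} (hk : 3 ≤ k) (M : ℕ) (hM : 1 ≤ M)
    (n : Fin k → ℕ) (hn : ∀ i j, n i ≤ n j + M) (b : Fin k) (p : ℕ) (hp : k + 2 ≤ p)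
    (a : Fin k) :
    ∃ l : List (Fin k), l.length = p ∧ (a :: (l ++ [b])).IsChain (· ≠ ·) ∧
      ∀ i j, n i + l.count i ≤ n j + l.count j + M := by
  induction p using Nat.strong_induction_on generalizing a with
  | _ p ih =>
  rcases lt_trichotomy p (2 * k + 1) with hlt | rfl | hgt
  · obtain ⟨T, hTcard, hT⟩ := exists_finset_card_eq_forall_le n (p - k) (by simp; omega)
    obtain ⟨m, hnodup, rfl, hm⟩ := T.exists_list_concat_isChain_ne (by omega) b
    rw [List.toFinset_card_of_nodup hnodup] at hTcard
    obtain _ | ⟨s, m⟩ := m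
    · simp at hTcard
      omega
    obtain ⟨l, hlen, hcount, hl⟩ := exists_enumeration_isChain_ne hk a s
    refine ⟨l ++ s :: m, by simp only [List.length_append]; omega, ?_, fun i j => ?_⟩
    · simpa using hl.append_cons_overlap hm
    · simp only [List.count_append, hcount, hnodup.count]
      have hle := hT i
      simp only [List.mem_toFinset] at hle
      have := hn i j
      grind
  · obtain ⟨t, -, ht⟩ := Finset.exists_min_image Finset.univ n ⟨a, Finset.mem_univ a⟩
    obtain ⟨l, hlen, hcount, hl⟩ := exists_enumeration_isChain_ne hk a t
    obtain ⟨m, hlen', hcount', hm⟩ := exists_enumeration_isChain_ne hk t b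
    refine ⟨l ++ t :: m, by simp only [List.length_append, List.length_cons]; omega, ?_,
      fun i j => ?_⟩
    · simpa using hl.append_cons_overlap hm
    · simp only [List.count_append, List.count_cons, hcount, hcount']
      have := ht j (Finset.mem_univ j)
      have := hn i j
      grind
  · obtain ⟨l, hlen, hcount, hl⟩ := exists_enumeration_isChain_ne hk a a
    obtain ⟨s, m, rfl⟩ : ∃ s m, l = m ++ [s] := by
      rcases List.eq_nil_or_concat l with rfl | ⟨m, s, rfl⟩
      · simp at hlen
        omega
      · exact ⟨s, m, by simp⟩
    obtain ⟨l', hlen', hl', hbal⟩ := ih (p - k) (by omega) (by omega) s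
    refine ⟨m ++ [s] ++ l', by rw [List.length_append]; omega, ?_, fun i j => ?_⟩
    · have hms : (a :: (m ++ [s])).IsChain (· ≠ ·) := List.IsChain.left_of_append
        (l₂ := [a]) (by simpa using hl)
      simpa using hms.append_cons_overlap hl'
    · rw [List.count_append (a := i), List.count_append (a := j), hcount, hcount]
      have := hbal i j
      omega

theorem balanceOn_le_iff {V : Type*} {k : ℕ} (S : Finset V) (φ : V → Fin k) (M : ℕ) :
    balanceOn S φ ≤ M ↔ ∀ i j, (S.filter fun v => φ v = i).card ≤
      (S.filter fun v => φ v = j).card + M := by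
  simp only [balanceOn, Finset.sup_le_iff, Finset.mem_univ, true_imp_iff, Prod.forall,
    tsub_le_iff_left]

/-- Extending an `α`-balanced proper `k`-coloring of `G − P` along a pendant path `P` with
at least `k + 2` vertices, obtaining an `α*`-balanced proper coloring of `G` with
`α* ≤ α + 1`, and `α* ≤ α` whenever `α ≥ 1`. -/
theorem stmt4 {V : Type*} [Fintype V] [DecidableEq V] (G : SimpleGraph V)
    (k p : ℕ) (hk : 3 ≤ k) (hp : k + 2 ≤ p)
    (w : Fin p → V) (hw : IsPendantPath G w)
    (φ : V → Fin k) (α : ℕ)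
    (hproper : ∀ a b : V, a ∉ Set.range w → b ∉ Set.range w → G.Adj a b → φ a ≠ φ b)
    (hbal : balanceOn (Finset.univ \ Finset.univ.image w) φ = α) :
    ∃ (ψ : V → Fin k) (α' : ℕ),
      (∀ v : V, v ∉ Set.range w → ψ v = φ v) ∧
      IsProperColoring G ψ ∧
      balanceOn Finset.univ ψ = α' ∧
      α' ≤ α + 1 ∧ (1 ≤ α → α' ≤ α) := by
  obtain ⟨hinj, u, v, hu, hv, hadj⟩ := hw
  have hn := (balanceOn_le_iff _ φ (max α 1)).1 (hbal.le.trans (le_max_left _ _))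
  obtain ⟨l, rfl, hchain, hl⟩ := exists_balanced_path_coloring hk (max α 1) (le_max_right _ _)
    _ hn (φ v) p hp (φ u)
  set ψ : V → Fin k := Function.extend w l.get φ
  have hψw : ∀ i, ψ (w i) = l.get i := fun i => hinj.extend_apply _ _ i
  have hψ : ∀ x, x ∉ Set.range w → ψ x = φ x := fun x hx =>
    Function.extend_apply' _ _ _ (by simpa using hx)
  have hstep : ∀ i j : Fin l.length, i.val + 1 = j.val → l.get i ≠ l.get j := by
    intro i j hij
    have := List.isChain_iff_getElem.1 hchain (i + 1) (by simp)
    have hj : i.val + 1 < l.length := hij ▸ j.2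
    simpa [List.getElem_append, hj, ← hij] using this
  have hfirst : ∀ i : Fin l.length, i.val = 0 → φ u ≠ l.get i := by
    intro i hi
    have := List.isChain_iff_getElem.1 hchain 0 (by simp)
    have hi' := i.2
    simpa [List.getElem_append, hi, show 0 < l.length by omega] using this
  have hlast : ∀ i : Fin l.length, i.val = l.length - 1 → l.get i ≠ φ v := by
    intro i hi
    have := List.isChain_iff_getElem.1 hchain (i + 1) (by simp)
    have hi' : ¬ i.val + 1 < l.length := by omega
    simpa [List.getElem_append, hi'] using this
  have hpath : ∀ i x, G.Adj (w i) x → ψ (w i) ≠ ψ x := by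
    intro i x hx
    rcases (hadj i x).1 hx with ⟨j, rfl, hij | hij⟩ | ⟨hi, rfl⟩ | ⟨hi, rfl⟩
    · rw [hψw, hψw]
      exact hstep i j hij
    · rw [hψw, hψw]
      exact (hstep j i hij).symm
    · rw [hψw, hψ _ hu]
      exact (hfirst i hi).symm
    · rw [hψw, hψ _ hv]
      exact hlast i hi
  have hcard : ∀ c, (Finset.univ.filter fun x => ψ x = c).card =
      ((Finset.univ \ Finset.univ.image w).filter fun x => φ x = c).card + l.count c := by
    intro c
    have hcount : ((Finset.univ.image w).filter fun x => ψ x = c).card = l.count c := by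
      rw [Finset.filter_image, Finset.card_image_of_injective _ hinj]
      conv_rhs => rw [← List.ofFn_get l, ← Multiset.coe_count, ← Fin.univ_val_map,
        Multiset.count_map]
      simp only [hψw, eq_comm (b := c)]
      rfl
    have hout : ((Finset.univ \ Finset.univ.image w).filter fun x => φ x = c) =
        (Finset.univ \ Finset.univ.image w).filter fun x => ψ x = c := by
      refine Finset.filter_congr fun x hx => ?_
      rw [hψ x (by simpa using hx)]
    rw [hout, ← hcount, ← Finset.card_union_of_disjoint
      (Finset.disjoint_filter_filter Finset.sdiff_disjoint), ← Finset.filter_union,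
      Finset.sdiff_union_of_subset (Finset.subset_univ _)]
  have hfinal : balanceOn Finset.univ ψ ≤ max α 1 := by
    rw [balanceOn_le_iff]
    intro i j
    rw [hcard, hcard]
    exact hl i j
  refine ⟨ψ, _, hψ, ?_, rfl, by omega, by omega⟩
  intro x y hxy
  by_cases hx : x ∈ Set.range w
  · obtain ⟨i, rfl⟩ := hx
    exact hpath i y hxy
  by_cases hy : y ∈ Set.range w
  · obtain ⟨i, rfl⟩ := hy
    exact (hpath i x hxy.symm).symm
  rw [hψ x hx, hψ y hy]
  exact hproper x y hx hy hxy
end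

section
/- Let k ≥ 3, let G be a finite simple graph, and let P = {w_1, …, w_p} be a pendant path of G with p = k + 2 + x(k + 1) + c vertices, where x ≥ 1 and c ≥ 0 are integers; set Q = V(G) \ P. Let φ be a proper k-coloring of the subgraph of G induced by Q that is α-balanced. Then φ can be extended to a proper k-coloring φ* of G (agreeing with φ on Q) that is α*-balanced for some α* ≤ max{α − x, 1}. -/
/-- Distributing `q` unit increments over the values `a i`, at most `m` per index and always at a
lowest index that is not yet saturated, yields increments `n` for which no transfer of a unit
to an unsaturated index improves the balance. -/
theorem exists_capped_balanced_increments {k : ℕ} (a : Fin k → ℕ) (m q : ℕ) (hq : q ≤ k * m) :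
    ∃ n : Fin k → ℕ, (∀ i, n i ≤ m) ∧ ∑ i, n i = q ∧
      ∀ i j, n i < m → 0 < n j → a j + n j ≤ a i + n i + 1 := by
  induction q with
  | zero => exact ⟨fun _ => 0, by simp, by simp, by simp⟩
  | succ q ih =>
    obtain ⟨n, hm, hs, hb⟩ := ih (by omega)
    have hne : (Finset.univ.filter fun i => n i < m).Nonempty := by
      by_contra h
      rw [Finset.not_nonempty_iff_eq_empty, Finset.filter_eq_empty_iff] at h
      have : ∑ i, n i = ∑ _i : Fin k, m :=
        Finset.sum_congr rfl fun i hi => le_antisymm (hm i) (not_lt.mp (h hi))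
      simp only [Finset.sum_const, Finset.card_univ, Fintype.card_fin, smul_eq_mul] at this
      omega
    obtain ⟨d, hd, hmin⟩ := Finset.exists_min_image _ (fun i => a i + n i) hne
    simp only [Finset.mem_filter, Finset.mem_univ, true_and] at hd hmin
    refine ⟨fun i => n i + if i = d then 1 else 0, fun i => ?_, ?_, fun i j hi hj => ?_⟩
    · have := hm i
      dsimp only
      split_ifs with h
      · subst h; omega
      · omega
    · rw [Finset.sum_add_distrib, hs]
      simp
    · clear hs hq
      dsimp only at hi hj ⊢
      have hi' : n i < m := by omega
      have h1 := hmin i hi'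
      have h2 := hb i j hi'
      split_ifs at hi hj ⊢ <;> subst_vars <;> omega

/-- The capped increments of a family `a` of spread at most `α` bring the spread down to
`max (α - x) 1`. -/
theorem capped_balanced_increments_spread {k : ℕ} (a n : Fin k → ℕ) (m p x α : ℕ)
    (hspread : ∀ i j, a j ≤ a i + α) (hm : ∀ i, n i ≤ m) (hsum : ∑ i, n i = p)
    (hexch : ∀ i j, n i < m → 0 < n j → a j + n j ≤ a i + n i + 1)
    (hx : 1 ≤ x) (hpx : k * x < p) (hpm : p + (k - 1) * x ≤ k * m) (i j : Fin k) :
    a j + n j - (a i + n i) ≤ max (α - x) 1 := by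
  have hij := hspread i j
  have hk : 0 < k := i.pos
  have hxm : x ≤ m := by
    by_contra h
    have : k * m ≤ k * x := Nat.mul_le_mul_left k (by omega)
    omega
  rcases (hm i).lt_or_eq with hi | hi
  · rcases Nat.eq_zero_or_pos (n j) with hj | hj
    · by_contra hlt
      have hle : ∀ l, n l ≤ x := fun l => by
        have h1 := hspread l j
        have h2 := hexch i l hi
        omega
      have : ∑ l, n l ≤ ∑ _l : Fin k, x := Finset.sum_le_sum fun l _ => hle l
      simp only [Finset.sum_const, Finset.card_univ, Fintype.card_fin, smul_eq_mul] at this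
      omega
    · have := hexch i j hi hj
      omega
  · by_cases hji : j = i
    · subst hji; omega
    rcases Nat.eq_zero_or_pos (n j) with hj | hj
    · omega
    by_cases hl : ∃ l, l ≠ i ∧ n l + x + 1 ≤ m
    · obtain ⟨l, -, hl⟩ := hl
      have h1 := hspread i l
      have h2 := hexch l j (by omega) hj
      omega
    · push Not at hl
      have herase : n i + ∑ l ∈ Finset.univ.erase i, n l = p := by
        rw [Finset.add_sum_erase _ _ (Finset.mem_univ i), hsum]
      have hj' : j ∈ Finset.univ.erase i := by simp [hji]
      have hrest := Finset.add_sum_erase _ n hj'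
      have hle : ∑ _l ∈ (Finset.univ.erase i).erase j, (m - x) ≤
          ∑ l ∈ (Finset.univ.erase i).erase j, n l := by
        refine Finset.sum_le_sum fun l hl' => ?_
        have := hl l (by simp at hl'; tauto)
        omega
      rw [Finset.sum_const, Finset.card_erase_of_mem hj',
        Finset.card_erase_of_mem (Finset.mem_univ i), Finset.card_univ, Fintype.card_fin,
        smul_eq_mul] at hle
      have hk2 : 2 ≤ k := by
        have := Finset.card_pos.mpr ⟨j, hj'⟩
        rw [Finset.card_erase_of_mem (Finset.mem_univ i), Finset.card_univ,
          Fintype.card_fin] at this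
        omega
      obtain ⟨r, rfl⟩ := Nat.exists_eq_add_of_le hk2
      obtain ⟨y, rfl⟩ := Nat.exists_eq_add_of_le hxm
      have e1 : 2 + r - 1 - 1 = r := by omega
      have e2 : 2 + r - 1 = r + 1 := by omega
      have e3 : x + y - x = y := by omega
      rw [e1, e3] at hle
      rw [e2] at hpm
      have hy : n j ≤ y := by nlinarith
      omega

/-- A sequence from `A` to `B` with consecutive terms distinct and prescribed multiplicities `n` of
the interior terms exists as soon as no colour is too frequent. -/
theorem exists_sequence_with_multiplicities {κ : Type*} [Fintype κ] [DecidableEq κ] (B : κ)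
    (p : ℕ) (A : κ) (n : κ → ℕ) (hsum : ∑ i, n i = p)
    (hn : ∀ i, 2 * n i + (if i = A then 1 else 0) + (if i = B then 1 else 0) ≤ p + 1) :
    ∃ s : ℕ → κ, s 0 = A ∧ s (p + 1) = B ∧ (∀ i ≤ p, s i ≠ s (i + 1)) ∧
      ∀ c, ∑ i ∈ Finset.range p, (if s (i + 1) = c then 1 else 0) = n c := by
  induction p generalizing A n with
  | zero =>
    have hAB : A ≠ B := by
      rintro rfl
      have := hn A
      simp at this
    refine ⟨fun i => if i = 0 then A else B, by simp, by simp, ?_, fun c => ?_⟩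
    · intro i hi
      obtain rfl : i = 0 := by omega
      simpa using hAB
    · simpa using ((Finset.sum_eq_zero_iff.mp hsum) c (Finset.mem_univ c)).symm
  | succ p ih =>
    obtain ⟨d, hdA, hd, hstep⟩ : ∃ d, d ≠ A ∧ 0 < n d ∧ ∀ i, i ≠ d →
        2 * n i + (if i = B then 1 else 0) ≤ p + 1 := by
      by_cases ht : ∃ d, d ≠ A ∧ p + 1 < 2 * n d + (if d = B then 1 else 0)
      · obtain ⟨d, hdA, hd⟩ := ht
        refine ⟨d, hdA, by split_ifs at hd <;> omega, fun i hi => ?_⟩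
        have hpair : n i + n d ≤ p + 1 := by
          rw [← hsum, ← Finset.sum_pair hi]
          exact Finset.sum_le_sum_of_subset (Finset.subset_univ _)
        have hone : (if i = B then 1 else 0) + (if d = B then 1 else 0) ≤ 1 := by
          split_ifs with h1 h2
          · exact absurd (h1.trans h2.symm) hi
          all_goals omega
        omega
      · push Not at ht
        obtain ⟨d, hdA, hd⟩ : ∃ d, d ≠ A ∧ 0 < n d := by
          by_contra! h
          have : ∑ i, n i = n A :=
            Finset.sum_eq_single A (fun b _ hb => by have := h b hb; omega) (by simp)
          have := hn A
          simp only [if_true] at this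
          omega
        refine ⟨d, hdA, hd, fun i _ => ?_⟩
        by_cases hiA : i = A
        · have := hn i
          simp only [hiA, if_true] at this ⊢
          omega
        · exact ht i hiA
    obtain ⟨s, hs0, hsB, hs, hcount⟩ := ih d (fun i => n i - if i = d then 1 else 0) (by
      have h1 : ∑ i, ((n i - if i = d then 1 else 0) + if i = d then 1 else 0) = ∑ i, n i :=
        Finset.sum_congr rfl fun i _ => by
          split_ifs with h
          · subst h; omega
          · omega
      rw [Finset.sum_add_distrib] at h1
      simp only [Finset.sum_ite_eq', Finset.mem_univ, if_true] at h1
      omega) (fun i => by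
        have h1 := hn i
        have h2 := hstep i
        by_cases h : i = d
        · subst h
          simp only [if_true]
          omega
        · have := h2 h
          simp only [h, if_false]
          omega)
    refine ⟨fun i => Nat.casesOn i A s, rfl, hsB, fun i hi => ?_, fun c => ?_⟩
    · cases i with
      | zero => simpa [hs0] using hdA.symm
      | succ i => exact hs i (by omega)
    · rw [Finset.sum_range_succ']
      change ∑ i ∈ Finset.range p, (if s (i + 1) = c then 1 else 0) +
        (if s 0 = c then 1 else 0) = n c
      rw [hcount, hs0]
      by_cases h : c = d
      · subst h
        simp only [if_true]
        omega
      · simp [h, Ne.symm h]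

theorem card_filter_extend_eq {V κ : Type*} [Fintype V] [DecidableEq V] [DecidableEq κ] {p : ℕ}
    (w : Fin p → V) (hw : Function.Injective w) (s : ℕ → κ) (φ : V → κ) (c : κ) :
    (Finset.univ.filter fun v => Function.extend w (fun i => s (i.val + 1)) φ v = c).card =
      ((Finset.univ \ Finset.univ.image w).filter fun v => φ v = c).card +
        ∑ i ∈ Finset.range p, (if s (i + 1) = c then 1 else 0) := by
  rw [Finset.card_filter, Finset.card_filter,
    ← Finset.sum_sdiff (Finset.subset_univ (Finset.univ.image w)),
    Finset.sum_image fun _ _ _ _ h => hw h, Finset.sum_range]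
  congr 1
  · refine Finset.sum_congr rfl fun v hv => ?_
    rw [Function.extend_apply' _ _ _ (by simpa using hv)]
  · exact Finset.sum_congr rfl fun i _ => by rw [hw.extend_apply]

theorem isProperColoring_extend_of_sequence {V : Type*} {k p : ℕ} {G : SimpleGraph V}
    {w : Fin p → V} (hw : Function.Injective w) {u v : V} (hu : u ∉ Set.range w)
    (hv : v ∉ Set.range w)
    (hadj : ∀ (i : Fin p) (b : V), G.Adj (w i) b ↔
      ((∃ j : Fin p, b = w j ∧ (i.val + 1 = j.val ∨ j.val + 1 = i.val)) ∨
        (i.val = 0 ∧ b = u) ∨ (i.val = p - 1 ∧ b = v)))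
    {φ : V → Fin k}
    (hproper : ∀ a b : V, a ∉ Set.range w → b ∉ Set.range w → G.Adj a b → φ a ≠ φ b)
    {s : ℕ → Fin k} (hs0 : s 0 = φ u) (hsp : s (p + 1) = φ v)
    (hs : ∀ i ≤ p, s i ≠ s (i + 1)) :
    IsProperColoring G (Function.extend w (fun i => s (i.val + 1)) φ) := by
  have hpath : ∀ i b, G.Adj (w i) b →
      Function.extend w (fun i => s (i.val + 1)) φ (w i) ≠
        Function.extend w (fun i => s (i.val + 1)) φ b := by
    intro i b h
    have hi := i.isLt
    rw [hw.extend_apply]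
    rcases (hadj i b).mp h with ⟨j, rfl, hij | hij⟩ | ⟨h0, rfl⟩ | ⟨h0, rfl⟩
    · rw [hw.extend_apply, ← hij]
      exact hs _ (by omega)
    · rw [hw.extend_apply, ← hij]
      exact (hs _ (by omega)).symm
    · rw [Function.extend_apply' _ _ _ hu, ← hs0, h0]
      exact (hs 0 (by omega)).symm
    · rw [Function.extend_apply' _ _ _ hv, ← hsp, show i.val + 1 = p by omega]
      exact hs p le_rfl
  intro a b h
  by_cases ha : a ∈ Set.range w
  · obtain ⟨i, rfl⟩ := ha
    exact hpath i b h
  by_cases hb : b ∈ Set.range w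
  · obtain ⟨i, rfl⟩ := hb
    exact (hpath i a h.symm).symm
  · rw [Function.extend_apply' _ _ _ ha, Function.extend_apply' _ _ _ hb]
    exact hproper a b ha hb h

/-- A colour may be used on slightly less than half of the pendant path without exceeding the
total capacity needed to lower the balance by `x`. -/
theorem add_mul_le_mul_half (k p x c : ℕ) (hk : 3 ≤ k) (hp : p = k + 2 + x * (k + 1) + c) :
    p + (k - 1) * x ≤ k * ((p - 1) / 2) := by
  obtain ⟨r, rfl⟩ := Nat.exists_eq_add_of_le hk
  have e : 3 + r - 1 = r + 2 := by omega
  rw [e]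
  have hpr : p = 5 + 4 * x + (r + x * r + c) := by rw [hp]; ring
  set m := (p - 1) / 2 with hm
  have h1 : p ≤ 2 * m + 2 := by omega
  have h2 : p + 2 * x ≤ 3 * m := by omega
  have h3 : x ≤ m := by omega
  nlinarith [Nat.mul_le_mul_left r h3]

/-- Extending an `α`-balanced proper `k`-coloring of `G − P` along a pendant path `P` with
`k + 2 + x(k+1) + c` vertices (`x ≥ 1`, `c ≥ 0`), obtaining an `α*`-balanced proper
coloring of `G` with `α* ≤ max {α − x, 1}`. -/
theorem stmt5 {V : Type*} [Fintype V] [DecidableEq V] (G : SimpleGraph V)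
    (k p x c : ℕ) (hk : 3 ≤ k) (hx : 1 ≤ x) (hp : p = k + 2 + x * (k + 1) + c)
    (w : Fin p → V) (hw : IsPendantPath G w)
    (φ : V → Fin k) (α : ℕ)
    (hproper : ∀ a b : V, a ∉ Set.range w → b ∉ Set.range w → G.Adj a b → φ a ≠ φ b)
    (hbal : balanceOn (Finset.univ \ Finset.univ.image w) φ = α) :
    ∃ (ψ : V → Fin k) (α' : ℕ),
      (∀ v : V, v ∉ Set.range w → ψ v = φ v) ∧
      IsProperColoring G ψ ∧
      balanceOn Finset.univ ψ = α' ∧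
      α' ≤ max (α - x) 1 := by
  obtain ⟨hinj, u, v, hu, hv, hadj⟩ := hw
  set Q : Finset V := Finset.univ \ Finset.univ.image w
  let a : Fin k → ℕ := fun i => (Q.filter fun v => φ v = i).card
  have hspread : ∀ i j, a j ≤ a i + α := fun i j => by
    have h : a j - a i ≤ balanceOn Q φ :=
      Finset.le_sup (f := fun ij : Fin k × Fin k =>
        (Q.filter fun v => φ v = ij.1).card - (Q.filter fun v => φ v = ij.2).card)
        (Finset.mem_univ (j, i))
    omega
  have hpm := add_mul_le_mul_half k p x c hk hp
  have hkx : k * x < p := by rw [hp]; nlinarith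
  obtain ⟨n, hm, hsum, hexch⟩ :=
    exists_capped_balanced_increments a ((p - 1) / 2) p (by omega)
  obtain ⟨s, hs0, hsp, hs, hcount⟩ :=
    exists_sequence_with_multiplicities (φ v) p (φ u) n hsum fun i => by
      have := hm i
      split_ifs <;> omega
  refine ⟨Function.extend w (fun i => s (i.val + 1)) φ, _,
    fun v hv => Function.extend_apply' _ _ _ hv,
    isProperColoring_extend_of_sequence hinj hu hv hadj hproper hs0 hsp hs, rfl,
    Finset.sup_le fun ij _ => ?_⟩
  rw [card_filter_extend_eq w hinj, card_filter_extend_eq w hinj, hcount, hcount]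
  exact capped_balanced_increments_spread a n _ p x α hspread hm hsum hexch hx hkx hpm ij.2 ij.1
end

section
/- Let k ≥ 3 and let G be a finite simple graph containing pairwise disjoint pendant paths P_1, …, P_r, each P_i having p_i ≥ 2k + 3 vertices, where p_i = k + 2 + c_i + x_i(k + 1) with integers x_i ≥ 1 and 0 ≤ c_i ≤ k, and such that for each i the two neighbors outside P_i of the endpoints of P_i lie in Q = V(G) \ (P_1 ∪ ⋯ ∪ P_r). If x_1 + ⋯ + x_r ≥ |Q|, then G admits an equitable k-coloring if and only if the subgraph of G induced by Q admits a proper k-coloring. -/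
open Finset in
/-- A path on `p` vertices whose ends must avoid the colors `a` and `b` has a proper coloring with
prescribed class sizes `n`, provided no color is too frequent on the path extended by `a` and
`b`. -/
theorem exists_path_coloring {α : Type*} [Fintype α] [DecidableEq α] (p : ℕ) (n : α → ℕ)
    (a b : α) (hsum : ∑ j, n j = p)
    (hle : ∀ j, 2 * n j + (if j = a then 1 else 0) + (if j = b then 1 else 0) ≤ p + 1) :
    ∃ f : Fin p → α, (∀ j, #{i | f i = j} = n j) ∧
      (∀ i j : Fin p, i.val + 1 = j.val → f i ≠ f j) ∧
      (∀ i : Fin p, i.val = 0 → f i ≠ a) ∧ (∀ i : Fin p, i.val + 1 = p → f i ≠ b) ∧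
      (p = 0 → a ≠ b) := by
  induction p generalizing n a with
  | zero =>
    refine ⟨Fin.elim0, fun j => ?_, fun i => i.elim0, fun i => i.elim0, fun i => i.elim0, ?_⟩
    · have := single_le_sum (f := n) (fun _ _ => Nat.zero_le _) (mem_univ j)
      simp only [univ_eq_empty, filter_empty, card_empty]
      omega
    · rintro - rfl
      have := hle a
      simp at this
  | succ p ih =>
    have hpair : ∀ i j, i ≠ j → n i + n j ≤ p + 1 := fun i j hij => by
      rw [← hsum, ← sum_pair hij]
      exact sum_le_sum_of_subset (subset_univ _)
    obtain ⟨c, hca, hnc, hc⟩ : ∃ c, c ≠ a ∧ 1 ≤ n c ∧ ∀ j, j ≠ a → j ≠ c →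
        2 * n j + (if j = b then 1 else 0) ≤ p + 1 := by
      by_cases ht : ∃ c, c ≠ a ∧ p + 2 ≤ 2 * n c + (if c = b then 1 else 0)
      · obtain ⟨c, hca, hc⟩ := ht
        refine ⟨c, hca, by split_ifs at hc <;> omega, fun j hja hjc => ?_⟩
        have := hpair j c hjc
        split_ifs at * <;> first | omega | simp_all
      · push Not at ht
        obtain ⟨c, hca, hc⟩ : ∃ c, c ≠ a ∧ 1 ≤ n c := by
          by_contra! h
          have h1 : ∑ j, n j = n a := sum_eq_single a
            (fun j _ hj => by have := h j hj; omega) (by simp)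
          have := hle a
          simp only [if_true] at this
          omega
        exact ⟨c, hca, hc, fun j hja _ => by have := ht j hja; omega⟩
    obtain ⟨f, hcard, hadj, hfirst, hlast, hzero⟩ :=
      ih (fun j => n j - if j = c then 1 else 0) c
      (by
        have h1 : ∑ j, ((n j - if j = c then 1 else 0) + if j = c then 1 else 0) = p + 1 := by
          rw [← hsum]
          refine sum_congr rfl fun j _ => ?_
          split_ifs with h
          · subst h; omega
          · simp
        rw [sum_add_distrib] at h1
        simpa using h1)
      (fun j => by
        have h1 := hle j
        have h2 := hc j
        by_cases hjc : j = c
        · subst hjc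
          simp only [if_true, hca, if_false] at *
          omega
        · by_cases hja : j = a
          · subst hja
            simp only [if_true, hjc, if_false] at *
            omega
          · have := h2 hja hjc
            simp only [hjc, if_false]
            omega)
    refine ⟨Fin.cons c f, fun j => ?_, fun i j hij => ?_, fun i hi => ?_, fun i hi => ?_, by simp⟩
    · rw [Fin.card_filter_univ_succ]
      simp only [Fin.cons_zero, Fin.cons_succ, hcard]
      by_cases hjc : c = j
      · subst hjc
        simp only [if_true]
        omega
      · simp [hjc, Ne.symm hjc]
    · cases j using Fin.cases with
      | zero => simp at hij
      | succ j =>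
        cases i using Fin.cases with
        | zero =>
          simp only [Fin.cons_zero, Fin.cons_succ]
          exact (hfirst j (by simpa using hij.symm)).symm
        | succ i =>
          simp only [Fin.cons_succ]
          exact hadj i j (by simpa using hij)
    · obtain rfl : i = 0 := Fin.ext hi
      simpa using hca
    · cases i using Fin.cases with
      | zero => simpa using hzero (by simpa using hi.symm)
      | succ i => simpa using hlast i (by simpa using hi)

open Finset in
/-- Discrete intermediate value property for sums of natural numbers. -/
theorem exists_between_sum_eq {α : Type*} [Fintype α] [DecidableEq α] (l u : α → ℕ) (m : ℕ)
    (hlu : ∀ j, l j ≤ u j) (hl : ∑ j, l j ≤ m) (hu : m ≤ ∑ j, u j) :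
    ∃ n : α → ℕ, (∀ j, l j ≤ n j) ∧ (∀ j, n j ≤ u j) ∧ ∑ j, n j = m := by
  induction m, hl using Nat.le_induction with
  | base => exact ⟨l, fun _ => le_rfl, hlu, rfl⟩
  | succ m _ ih =>
    obtain ⟨n, hln, hnu, hn⟩ := ih (by omega)
    obtain ⟨j, -, hj⟩ : ∃ j ∈ univ, n j < u j := exists_lt_of_sum_lt (by omega)
    refine ⟨fun i => n i + if i = j then 1 else 0, fun i => (hln i).trans (by simp),
      fun i => ?_, by simp [sum_add_distrib, hn]⟩
    have := hnu i
    dsimp only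
    split_ifs with h
    · subst h; omega
    · simpa

open Finset in
/-- Integer matrices with row sums `p`, column sums `d` and entries of row `i` at most `h i`. -/
theorem exists_bounded_matrix {ι α : Type*} [DecidableEq ι] [Fintype α] [DecidableEq α]
    (p h : ι → ℕ) (s : Finset ι) (hlow : ∀ i, 2 * h i ≤ p i) (hhigh : ∀ i, p i ≤ 3 * h i)
    (d : α → ℕ) (hsum : ∑ j, d j = ∑ i ∈ s, p i) (hd : ∀ j, d j ≤ ∑ i ∈ s, h i) :
    ∃ N : ι → α → ℕ, (∀ i ∈ s, ∑ j, N i j = p i) ∧ (∀ i ∈ s, ∀ j, N i j ≤ h i) ∧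
      ∀ j, ∑ i ∈ s, N i j = d j := by
  induction s using Finset.induction_on generalizing d with
  | empty => exact ⟨fun _ _ => 0, by simp, by simp, fun j => by have := hd j; simp at this ⊢; omega⟩
  | insert e s he ih =>
    rw [sum_insert he] at hsum
    simp only [sum_insert he] at hd
    have hlowS : 2 * ∑ i ∈ s, h i ≤ ∑ i ∈ s, p i := by
      rw [mul_sum]; exact sum_le_sum fun i _ => hlow i
    have hhighS : ∑ i ∈ s, p i ≤ 3 * ∑ i ∈ s, h i := by
      rw [mul_sum]; exact sum_le_sum fun i _ => hhigh i
    have hle := hlow e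
    have hhe := hhigh e
    set H := ∑ i ∈ s, h i
    have hl : ∑ j, (d j - H) ≤ p e := by
      have h1 : ∑ j with H < d j, (d j - H) = ∑ j, (d j - H) :=
        sum_subset (subset_univ _) fun j _ hj => by
          simp only [mem_filter, mem_univ, true_and] at hj
          omega
      rw [← h1]
      rcases le_or_gt #{j | H < d j} 2 with hs | hs
      · have h2 : ∑ j with H < d j, (d j - H) ≤ #{j | H < d j} * h e :=
          sum_le_card_nsmul _ _ _ fun j _ => by have := hd j; omega
        have := Nat.mul_le_mul_right (h e) hs
        omega
      · have h2 : ∑ j with H < d j, (d j - H) + #{j | H < d j} * H = ∑ j with H < d j, d j := by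
          rw [← smul_eq_mul, ← sum_const, ← sum_add_distrib]
          refine sum_congr rfl fun j hj => ?_
          simp only [mem_filter, mem_univ, true_and] at hj
          omega
        have h3 : ∑ j with H < d j, d j ≤ ∑ j, d j := sum_le_sum_of_subset (subset_univ _)
        have := Nat.mul_le_mul_right H hs
        simp only [Nat.succ_eq_add_one] at this
        omega
    have hu : p e ≤ ∑ j, min (h e) (d j) := by
      rcases le_or_gt #{j | h e < d j} 2 with hs | hs
      · have h2 : ∑ j, d j ≤ ∑ j, min (h e) (d j) + #{j | h e < d j} * H := by
          rw [card_filter, sum_mul, ← sum_add_distrib]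
          refine sum_le_sum fun j _ => ?_
          have := hd j
          split_ifs <;> omega
        have := Nat.mul_le_mul_right H hs
        omega
      · have h2 : #{j | h e < d j} * h e ≤ ∑ j with h e < d j, min (h e) (d j) :=
          card_nsmul_le_sum _ _ _ fun j hj => by
            simp only [mem_filter, mem_univ, true_and] at hj
            omega
        have h3 : ∑ j with h e < d j, min (h e) (d j) ≤ ∑ j, min (h e) (d j) :=
          sum_le_sum_of_subset (subset_univ _)
        have := Nat.mul_le_mul_right (h e) hs
        simp only [Nat.succ_eq_add_one] at this
        omega
    obtain ⟨n, hln, hnu, hn⟩ := exists_between_sum_eq (fun j => d j - H)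
      (fun j => min (h e) (d j)) (p e) (fun j => by have := hd j; omega) hl hu
    obtain ⟨N, hrow, hcap, hcol⟩ := ih (fun j => d j - n j)
      (by
        have h1 : ∑ j, (d j - n j) + ∑ j, n j = ∑ j, d j := by
          rw [← sum_add_distrib]
          refine sum_congr rfl fun j _ => ?_
          have := hnu j
          omega
        omega)
      (fun j => by have := hln j; omega)
    have hne : ∀ i ∈ s, i ≠ e := fun i hi hie => he (hie ▸ hi)
    refine ⟨Function.update N e n, fun i hi => ?_, fun i hi j => ?_, fun j => ?_⟩
    · rcases mem_insert.1 hi with rfl | hi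
      · simpa using hn
      · simpa [hne i hi] using hrow i hi
    · rcases mem_insert.1 hi with rfl | hi
      · have := hnu j
        simp only [Function.update_self]
        omega
      · simpa [hne i hi] using hcap i hi j
    · have h1 : ∑ i ∈ s, Function.update N e n i j = ∑ i ∈ s, N i j :=
        sum_congr rfl fun i hi => by simp [hne i hi]
      have := hnu j
      rw [sum_insert he, h1, hcol, Function.update_self]
      omega

open Finset in
/-- Class sizes of an equitable partition of `n` objects into `k` classes. -/
theorem exists_equitable_sizes (n k : ℕ) (hk : 0 < k) :
    ∃ t : Fin k → ℕ, ∑ j, t j = n ∧ ∀ j, t j = n / k ∨ t j = (n + k - 1) / k := by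
  refine ⟨fun j => n / k + if j.val < n % k then 1 else 0, ?_, fun j => ?_⟩
  · have hlt := Nat.mod_lt n hk
    have h1 : ∑ j : Fin k, (if j.val < n % k then 1 else 0) = n % k := by
      rw [Fin.sum_univ_eq_sum_range (fun j => if j < n % k then 1 else 0), sum_boole]
      have : {j ∈ range k | j < n % k} = range (n % k) := by
        ext j; simp only [mem_filter, mem_range]; omega
      simp [this]
    rw [sum_add_distrib, h1]
    simpa using Nat.div_add_mod n k
  · dsimp only
    split_ifs with h
    · right
      have h2 := Nat.div_add_mod n k
      have h3 : n + k - 1 = (n % k - 1) + k * (n / k + 1) := by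
        rw [mul_add]; omega
      have h4 : n % k - 1 < k := (Nat.sub_le _ _).trans_lt (Nat.mod_lt n hk)
      rw [h3, Nat.add_mul_div_left _ _ hk, Nat.div_eq_of_lt h4, zero_add]
    · left; rfl

theorem path_length_add_le {k c x : ℕ} (hk : 3 ≤ k) :
    k + 2 + c + x * (k + 1) + x ≤ k * ((k + 2 + c + x * (k + 1) - 1) / 2) := by
  obtain rfl | hk := hk.eq_or_lt
  · omega
  · have h1 : k + c + x * (k + 1) ≤ 2 * ((k + 2 + c + x * (k + 1) - 1) / 2) := by omega
    have h2 := Nat.mul_le_mul_left k h1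
    have h3 : 4 * (k + c + x * (k + 1)) ≤ k * (k + c + x * (k + 1)) :=
      Nat.mul_le_mul_right _ hk
    have h4 : x * (k + 1) = x * k + x := by ring
    have h5 : x * 3 ≤ x * k := Nat.mul_le_mul_left x (by omega)
    have h6 : k * (2 * ((k + 2 + c + x * (k + 1) - 1) / 2)) =
      2 * (k * ((k + 2 + c + x * (k + 1) - 1) / 2)) := by ring
    omega

/-- If `G` contains pairwise disjoint pendant paths `P_1, …, P_r`, each with
`p i = k + 2 + c i + x i * (k+1) ≥ 2k + 3` vertices (`x i ≥ 1`, `0 ≤ c i ≤ k`), whose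
endpoints' outside neighbors lie in `Q = V(G) \ (P_1 ∪ ⋯ ∪ P_r)`, and `x_1 + ⋯ + x_r ≥ |Q|`,
then `G` is equitably `k`-colorable iff the subgraph induced by `Q` is `k`-colorable. -/
theorem stmt6 {V : Type*} [Fintype V] [DecidableEq V] (G : SimpleGraph V)
    (k r : ℕ) (hk : 3 ≤ k) (p x c : Fin r → ℕ)
    (hx : ∀ i, 1 ≤ x i) (hc : ∀ i, c i ≤ k)
    (hp : ∀ i, p i = k + 2 + c i + x i * (k + 1))
    (hbig : ∀ i, 2 * k + 3 ≤ p i)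
    (w : (i : Fin r) → Fin (p i) → V)
    (hpath : ∀ i, IsPendantPath G (w i))
    (hdisj : ∀ i j : Fin r, i ≠ j → ∀ a b, w i a ≠ w j b)
    (hnbr : ∀ (i : Fin r) (a : Fin (p i)) (b : V), G.Adj (w i a) b →
      (∃ a', b = w i a') ∨ (∀ (j : Fin r) (a' : Fin (p j)), b ≠ w j a'))
    (Q : Finset V) (hQ : ∀ v : V, v ∈ Q ↔ ∀ (i : Fin r) (a : Fin (p i)), w i a ≠ v)
    (hsum : Q.card ≤ ∑ i, x i) :
    (∃ φ : V → Fin k, IsProperColoring G φ ∧ IsEquitable φ) ↔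
    (∃ ψ : V → Fin k, ∀ a b : V, a ∈ Q → b ∈ Q → G.Adj a b → ψ a ≠ ψ b) := by
  constructor
  · rintro ⟨φ, hφ, -⟩
    exact ⟨φ, fun a b _ _ => hφ a b⟩
  rintro ⟨ψ, hψ⟩
  let W : (Σ i, Fin (p i)) → V := fun s => w s.1 s.2
  have hW : Function.Injective W := by
    rintro ⟨i, a⟩ ⟨j, b⟩ h
    by_cases hij : i = j
    · subst hij
      exact congrArg (Sigma.mk i) ((hpath i).1 h)
    · exact absurd h (hdisj i j hij a b)
  have hQc : Finset.univ = Q ∪ Finset.univ.image W := by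
    ext v
    by_cases hv : v ∈ Q
    · simp [hv]
    · have := hv
      rw [hQ] at this
      push Not at this
      obtain ⟨i, a, h⟩ := this
      simp only [Finset.mem_univ, Finset.mem_union, Finset.mem_image, true_and, true_iff]
      exact Or.inr ⟨⟨i, a⟩, h⟩
  have hQd : Disjoint Q (Finset.univ.image W) := by
    rw [Finset.disjoint_left]
    intro v hv hv'
    obtain ⟨s, -, h⟩ := Finset.mem_image.1 hv'
    exact (hQ v).1 hv s.1 s.2 h
  have hcardV : Fintype.card V = Q.card + ∑ i, p i := by
    rw [← Finset.card_univ, hQc, Finset.card_union_of_disjoint hQd,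
      Finset.card_image_of_injective _ hW]
    simp
  let h : Fin r → ℕ := fun i => (p i - 1) / 2
  have hn_le : Fintype.card V ≤ k * ∑ i, h i := by
    rw [hcardV, Finset.mul_sum]
    calc Q.card + ∑ i, p i ≤ ∑ i, (p i + x i) := by rw [Finset.sum_add_distrib]; omega
      _ ≤ ∑ i, k * h i := Finset.sum_le_sum fun i _ => by
        simp only [h, hp i]
        exact path_length_add_le hk
  have hQ_le : Q.card ≤ Fintype.card V / k := by
    rw [Nat.le_div_iff_mul_le (by omega), hcardV]
    calc Q.card * k ≤ (∑ i, x i) * k := Nat.mul_le_mul_right _ hsum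
      _ = ∑ i, x i * k := Finset.sum_mul ..
      _ ≤ ∑ i, p i := Finset.sum_le_sum fun i _ => by rw [hp i, mul_add]; omega
      _ ≤ _ := Nat.le_add_left _ _
  obtain ⟨t, ht_sum, ht⟩ := exists_equitable_sizes (Fintype.card V) k (by omega)
  have hceil : Fintype.card V / k ≤ (Fintype.card V + k - 1) / k :=
    Nat.div_le_div_right (by omega)
  have hceil_le : (Fintype.card V + k - 1) / k ≤ ∑ i, h i := by
    rw [← Nat.lt_succ_iff, Nat.div_lt_iff_lt_mul (by omega), Nat.succ_mul, mul_comm]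
    omega
  let q : Fin k → ℕ := fun j => (Q.filter fun v => ψ v = j).card
  have hq_sum : ∑ j, q j = Q.card :=
    (Finset.card_eq_sum_card_fiberwise fun _ _ => Finset.mem_coe.2 (Finset.mem_univ _)).symm
  have hq_le : ∀ j, q j ≤ t j := fun j => by
    have h1 : q j ≤ Q.card := Finset.card_filter_le _ _
    rcases ht j with h2 | h2 <;> omega
  obtain ⟨N, hrow, hcap, hcol⟩ := exists_bounded_matrix p h Finset.univ
    (fun i => by simp only [h]; omega) (fun i => by have := hbig i; simp only [h]; omega)
    (fun j => t j - q j)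
    (by
      have h1 : ∑ j, (t j - q j) + ∑ j, q j = ∑ j, t j := by
        rw [← Finset.sum_add_distrib]
        exact Finset.sum_congr rfl fun j _ => Nat.sub_add_cancel (hq_le j)
      omega)
    (fun j => by rcases ht j with h2 | h2 <;> simp only [h2] <;> omega)
  choose hinj u v hu hv hadj using hpath
  have hcoloring := fun i => exists_path_coloring (p i) (N i) (ψ (u i)) (ψ (v i))
    (hrow i (Finset.mem_univ i)) (fun j => by
      have h1 := hcap i (Finset.mem_univ i) j
      have h2 := hbig i
      simp only [h] at h1
      split_ifs <;> omega)
  choose f hfcard hfadj hffirst hflast _ using hcoloring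
  let φ : V → Fin k := Function.extend W (fun s => f s.1 s.2) ψ
  have hφW : ∀ i a, φ (w i a) = f i a := fun i a => hW.extend_apply _ _ (⟨i, a⟩ : Σ i, Fin (p i))
  have hφQ : ∀ y ∈ Q, φ y = ψ y := fun y hy =>
    Function.extend_apply' _ _ _ fun ⟨s, hs⟩ => (hQ y).1 hy s.1 s.2 hs
  have hpathne : ∀ i a b, G.Adj (w i a) b → φ (w i a) ≠ φ b := by
    intro i a b hab
    have hmemQ : b ∉ Set.range (w i) → b ∈ Q := fun hb => by
      rcases hnbr i a b hab with ⟨a', rfl⟩ | h1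
      · exact absurd ⟨a', rfl⟩ hb
      · exact (hQ b).2 fun j a' => (h1 j a').symm
    have hpi := hbig i
    rcases (hadj i a b).1 hab with ⟨j, rfl, hj | hj⟩ | ⟨ha, rfl⟩ | ⟨ha, rfl⟩
    · rw [hφW, hφW]
      exact hfadj i a j hj
    · rw [hφW, hφW]
      exact (hfadj i j a hj).symm
    · rw [hφW, hφQ _ (hmemQ (hu i))]
      exact hffirst i a ha
    · rw [hφW, hφQ _ (hmemQ (hv i))]
      exact hflast i a (by omega)
  refine ⟨φ, fun a b hab => ?_, fun j => ?_⟩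
  · by_cases ha : a ∈ Q
    · by_cases hb : b ∈ Q
      · rw [hφQ a ha, hφQ b hb]
        exact hψ a b ha hb hab
      · rw [hQ] at hb
        push Not at hb
        obtain ⟨i, c, rfl⟩ := hb
        exact (hpathne i c a hab.symm).symm
    · rw [hQ] at ha
      push Not at ha
      obtain ⟨i, c, rfl⟩ := ha
      exact hpathne i c b hab
  · have hcount : (Finset.univ.filter fun y => φ y = j).card = t j := by
      have h1 : (Q.filter fun y => φ y = j).card = q j :=
        congrArg Finset.card (Finset.filter_congr fun y hy => by rw [hφQ y hy])
      have h2 : ((Finset.univ.image W).filter fun y => φ y = j).card = ∑ i, N i j := by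
        rw [Finset.card_filter, Finset.sum_image fun _ _ _ _ e => hW e, Fintype.sum_sigma]
        refine Finset.sum_congr rfl fun i _ => ?_
        simp only [W, hφW]
        rw [← Finset.card_filter, hfcard]
      rw [hQc, Finset.filter_union,
        Finset.card_union_of_disjoint (Finset.disjoint_filter_filter hQd), h1, h2, hcol]
      have := hq_le j
      omega
    rw [hcount]
    exact ht j
end

section
/- Let Q be a finite simple graph on n vertices and let k ≥ 1. Then Q admits a proper k-coloring if and only if the graph obtained from Q by adding n(k − 1) isolated vertices admits an equitable k-coloring. -/
/-- The graph obtained from `G` by adding `m` isolated vertices. -/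
def addIsolated {W : Type*} (G : SimpleGraph W) (m : ℕ) : SimpleGraph (W ⊕ Fin m) :=
  SimpleGraph.fromRel fun a b =>
    match a, b with
    | Sum.inl u, Sum.inl v => G.Adj u v
    | _, _ => False

/-- A family of natural numbers summing to `m` is the family of fiber sizes of a map out of
`Fin m`. -/
theorem exists_map_card_fiber_eq {ι : Type*} [Fintype ι] [DecidableEq ι] {m : ℕ} (c : ι → ℕ)
    (hc : ∑ i, c i = m) :
    ∃ f : Fin m → ι, ∀ i, (Finset.univ.filter fun x => f x = i).card = c i := by
  have e : Fin m ≃ Σ i, Fin (c i) := Fintype.equivOfCardEq (by simp [hc])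
  refine ⟨fun x => (e x).1, fun i => ?_⟩
  rw [← Fintype.card_subtype,
    Fintype.card_congr ((e.subtypeEquiv fun _ => Iff.rfl).trans
      (Equiv.sigmaSubtype (β := fun i => Fin (c i)) i)), Fintype.card_fin]

theorem addIsolated_adj_inl {W : Type*} (G : SimpleGraph W) (m : ℕ) (u v : W) :
    (addIsolated G m).Adj (Sum.inl u) (Sum.inl v) ↔ G.Adj u v := by
  simp only [addIsolated, SimpleGraph.fromRel_adj, ne_eq, Sum.inl.injEq, G.adj_comm v u, or_self]
  exact ⟨fun h => h.2, fun h => ⟨h.ne, h⟩⟩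

/-- Adding isolated vertices does not affect whether a coloring is proper. -/
theorem isProperColoring_addIsolated_iff {W : Type*} {k : ℕ} (G : SimpleGraph W) (m : ℕ)
    (ψ : W ⊕ Fin m → Fin k) :
    IsProperColoring (addIsolated G m) ψ ↔ IsProperColoring G (ψ ∘ Sum.inl) := by
  refine ⟨fun h u v huv => h _ _ ((addIsolated_adj_inl G m u v).2 huv), fun h => ?_⟩
  rintro (u | u) (v | v) huv
  · exact h u v ((addIsolated_adj_inl G m u v).1 huv)
  all_goals simp [addIsolated] at huv

/-- Any `k`-coloring of `n` vertices extends to an equitable one on `n * (k - 1)` more. -/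
theorem exists_isEquitable_sumElim {V : Type*} [Fintype V] {k : ℕ} (hk : 1 ≤ k)
    (φ : V → Fin k) :
    ∃ f : Fin (Fintype.card V * (k - 1)) → Fin k, IsEquitable (Sum.elim φ f) := by
  have hle (i : Fin k) : (Finset.univ.filter fun v => φ v = i).card ≤ Fintype.card V :=
    Finset.card_le_univ _
  have hsum : ∑ i, (Finset.univ.filter fun v => φ v = i).card = Fintype.card V :=
    (Finset.card_eq_sum_card_fiberwise fun _ _ => Finset.mem_coe.2 (Finset.mem_univ _)).symm
  obtain ⟨f, hf⟩ := exists_map_card_fiber_eq (m := Fintype.card V * (k - 1))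
    (fun i => Fintype.card V - (Finset.univ.filter fun v => φ v = i).card) (by
      rw [Finset.sum_tsub_distrib _ fun i _ => hle i, hsum, Finset.sum_const, Finset.card_univ,
        Fintype.card_fin, smul_eq_mul, Nat.mul_sub_one, mul_comm])
  refine ⟨f, fun i => Or.inl ?_⟩
  have hcard : Fintype.card (V ⊕ Fin (Fintype.card V * (k - 1))) = Fintype.card V * k := by
    rw [Fintype.card_sum, Fintype.card_fin, add_comm, ← Nat.mul_succ, Nat.succ_eq_add_one,
      Nat.sub_add_cancel hk]
  have hi := Nat.add_sub_cancel' (hle i)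
  rw [← hf i, Finset.card_filter, Finset.card_filter] at hi
  rw [hcard, Nat.mul_div_cancel _ hk, Finset.card_filter, Fintype.sum_sum_type]
  exact hi

/-- A graph `Q` on `n` vertices admits a proper `k`-coloring iff the graph obtained from
`Q` by adding `n(k-1)` isolated vertices admits an equitable `k`-coloring. -/
theorem stmt8 {V : Type*} [Fintype V] (Q : SimpleGraph V) (k : ℕ) (hk : 1 ≤ k) :
    (∃ φ : V → Fin k, IsProperColoring Q φ) ↔
    (∃ ψ : V ⊕ Fin (Fintype.card V * (k - 1)) → Fin k,
      IsProperColoring (addIsolated Q (Fintype.card V * (k - 1))) ψ ∧ IsEquitable ψ) := by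
  constructor
  · rintro ⟨φ, hφ⟩
    obtain ⟨f, hf⟩ := exists_isEquitable_sumElim hk φ
    exact ⟨Sum.elim φ f, (isProperColoring_addIsolated_iff Q _ _).2 (by simpa using hφ), hf⟩
  · rintro ⟨ψ, hψ, -⟩
    exact ⟨ψ ∘ Sum.inl, (isProperColoring_addIsolated_iff Q _ ψ).1 hψ⟩
end

section
/- Let G, n, k, ℓ, U, C_1, …, C_r, φ′, the network H, and the capacity function c be as in the flow-network construction for a cluster modulator. If G admits an equitable k-coloring whose restriction to U equals φ′, then there exists a feasible flow f in H under the capacities c with f((s, a_i)) = ℓ for every i ∈ {1, …, k} (equivalently, a feasible flow of value kℓ saturating every arc leaving the source). -/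
/-- The nodes of the flow network `H` for a cluster modulator: a source `src`, a sink
`snk`, a node `col i` for each color `i`, a node `clu i j` for each color `i` and each
cluster index `j`, and a node `ver v` for each vertex `v` of the graph. -/
inductive FNode (V : Type*) (k r : ℕ) where
  | src : FNode V k r
  | snk : FNode V k r
  | col : Fin k → FNode V k r
  | clu : Fin k → Fin r → FNode V k r
  | ver : V → FNode V k r
  deriving DecidableEq, Fintype

/-- The arcs of the flow network `H`: `(src, col i)` for each color `i`; `(col i, snk)`
for each `i`; `(col i, clu i j)` for all `i, j`; `(clu i j, ver v)` whenever `v ∈ C j` and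
no neighbor of `v` in `U` gets color `i` under `φ'`; and `(ver v, snk)` for each
`v ∉ U`. -/
def FArc {V : Type*} [DecidableEq V] (G : SimpleGraph V) (U : Finset V) {k r : ℕ}
    (C : Fin r → Set V) (φ' : V → Fin k) : Set (FNode V k r × FNode V k r) :=
  {e | (∃ i : Fin k, e = (.src, .col i)) ∨
       (∃ i : Fin k, e = (.col i, .snk)) ∨
       (∃ (i : Fin k) (j : Fin r), e = (.col i, .clu i j)) ∨
       (∃ (i : Fin k) (j : Fin r) (v : V), v ∈ C j ∧
          (∀ u ∈ U, G.Adj v u → φ' u ≠ i) ∧ e = (.clu i j, .ver v)) ∨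
       (∃ v : V, v ∉ U ∧ e = (.ver v, .snk))}

/-- The capacities: `ℓ` on each arc `(src, col i)`, `|φ'⁻¹(i) ∩ U|` on each arc
`(col i, snk)`, and `1` on all remaining arcs. -/
def FCap {V : Type*} [DecidableEq V] (U : Finset V) {k r : ℕ} (φ' : V → Fin k)
    (ℓ : ℕ) : FNode V k r × FNode V k r → ℕ
  | (.src, .col _) => ℓ
  | (.col i, .snk) => (U.filter fun v => φ' v = i).card
  | _ => 1

/-- `f` satisfies flow conservation at every node other than the source and the sink. -/
def FConserve {V : Type*} [Fintype V] [DecidableEq V] {k r : ℕ}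
    (f : FNode V k r × FNode V k r → ℕ) : Prop :=
  ∀ z : FNode V k r, z ≠ .src → z ≠ .snk →
    ∑ y : FNode V k r, f (y, z) = ∑ y : FNode V k r, f (z, y)

/-- A sum over the nodes of the network, split by the kind of node. -/
theorem FNode.sum_eq {V : Type*} [Fintype V] [DecidableEq V] {k r : ℕ} (g : FNode V k r → ℕ) :
    ∑ y, g y = g .src + g .snk + ∑ i, g (.col i) + ∑ i, ∑ j, g (.clu i j) + ∑ v, g (.ver v) := by
  let e : Unit ⊕ Unit ⊕ Fin k ⊕ (Fin k × Fin r) ⊕ V ≃ FNode V k r :=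
    { toFun := fun
        | .inl _ => .src
        | .inr (.inl _) => .snk
        | .inr (.inr (.inl i)) => .col i
        | .inr (.inr (.inr (.inl p))) => .clu p.1 p.2
        | .inr (.inr (.inr (.inr v))) => .ver v
      invFun := fun
        | .src => .inl ()
        | .snk => .inr (.inl ())
        | .col i => .inr (.inr (.inl i))
        | .clu i j => .inr (.inr (.inr (.inl (i, j))))
        | .ver v => .inr (.inr (.inr (.inr v)))
      left_inv := by rintro (_ | _ | _ | _ | _) <;> rfl
      right_inv := by rintro (_ | _ | _ | _ | _) <;> rfl }
  rw [← e.sum_comp g]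
  simp [e, Fintype.sum_sum_type, Fintype.sum_prod_type, add_assoc]

open Classical in
/-- The flow that routes one unit for every vertex of `S i` through the node `col i`: directly to
the sink for vertices of `U`, and through the cluster of the vertex otherwise. -/
noncomputable def selectionFlow {V : Type*} [DecidableEq V] (U : Finset V) {k r : ℕ}
    (C : Fin r → Set V) (φ : V → Fin k) (S : Fin k → Finset V) : FNode V k r × FNode V k r → ℕ
  | (.src, .col i) => (S i).card
  | (.col i, .snk) => ((S i).filter (· ∈ U)).card
  | (.col i, .clu i' j) => if i = i' then ((S i).filter (· ∈ C j)).card else 0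
  | (.clu i j, .ver v) => if v ∈ S i ∧ v ∈ C j then 1 else 0
  | (.ver v, .snk) => if v ∈ S (φ v) ∧ v ∉ U then 1 else 0
  | _ => 0

open Classical in
/-- If the sets `C j` partition the complement of `U`, every vertex outside `U` lies in exactly
one of them. -/
theorem sum_indicator_cluster {V : Type*} [DecidableEq V] {U : Finset V} {r : ℕ}
    {C : Fin r → Set V}
    (hCU : ∀ j : Fin r, ∀ v ∈ C j, v ∉ U)
    (hCcover : ∀ v : V, v ∉ U → ∃ j : Fin r, v ∈ C j)
    (hCdisj : ∀ j j' : Fin r, j ≠ j' → Disjoint (C j) (C j')) (v : V) :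
    ∑ j, (if v ∈ C j then 1 else 0) = if v ∉ U then 1 else 0 := by
  by_cases hv : v ∉ U
  · rw [if_pos hv]
    obtain ⟨j, hj⟩ := hCcover v hv
    rw [Finset.sum_eq_single j _ (by simp), if_pos hj]
    intro j' _ hne
    exact if_neg fun hj' => Set.disjoint_left.mp (hCdisj j' j hne) hj' hj
  · rw [if_neg hv]
    exact Finset.sum_eq_zero fun j _ => if_neg fun hj => hv (hCU j v hj)

open Classical in
/-- If the sets `C j` partition the complement of `U`, a finite set splits into its part in `U` and
its parts in the `C j`. -/
theorem card_filter_add_sum_cluster {V : Type*} [DecidableEq V] {U : Finset V} {r : ℕ}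
    {C : Fin r → Set V}
    (hCU : ∀ j : Fin r, ∀ v ∈ C j, v ∉ U)
    (hCcover : ∀ v : V, v ∉ U → ∃ j : Fin r, v ∈ C j)
    (hCdisj : ∀ j j' : Fin r, j ≠ j' → Disjoint (C j) (C j')) (T : Finset V) :
    (T.filter (· ∈ U)).card + ∑ j, (T.filter (· ∈ C j)).card = T.card := by
  have h : ∑ j, (T.filter (· ∈ C j)).card = (T.filter (· ∉ U)).card := by
    simp only [Finset.card_filter]
    rw [Finset.sum_comm]
    exact Finset.sum_congr rfl fun v _ => sum_indicator_cluster hCU hCcover hCdisj v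
  rw [h, Finset.card_filter_add_card_filter_not]

theorem selectionFlow_conserve {V : Type*} [Fintype V] [DecidableEq V] {U : Finset V} {k r : ℕ}
    {C : Fin r → Set V} (hCU : ∀ j : Fin r, ∀ v ∈ C j, v ∉ U)
    (hCcover : ∀ v : V, v ∉ U → ∃ j : Fin r, v ∈ C j)
    (hCdisj : ∀ j j' : Fin r, j ≠ j' → Disjoint (C j) (C j'))
    {φ : V → Fin k} {S : Fin k → Finset V} (hS : ∀ i, ∀ v ∈ S i, φ v = i) :
    FConserve (selectionFlow U C φ S) := by
  classical
  rintro (_ | _ | i | ⟨i, j⟩ | v) hsrc hsnk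
  · exact absurd rfl hsrc
  · exact absurd rfl hsnk
  · rw [FNode.sum_eq, FNode.sum_eq]
    have hsum : ∑ i', ∑ j, (if i = i' then ((S i).filter (· ∈ C j)).card else 0) =
        ∑ j, ((S i).filter (· ∈ C j)).card := by
      rw [Finset.sum_comm]
      simp
    simp only [selectionFlow, hsum, Finset.sum_const_zero, add_zero, zero_add]
    rw [← card_filter_add_sum_cluster hCU hCcover hCdisj (S i)]
  · rw [FNode.sum_eq, FNode.sum_eq]
    simp only [selectionFlow, Finset.sum_ite_eq', Finset.mem_univ, if_true,
      Finset.sum_const_zero, add_zero, zero_add]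
    rw [← Finset.card_filter]
    congr 1
    ext v
    simp
  · rw [FNode.sum_eq, FNode.sum_eq]
    simp only [selectionFlow, Finset.sum_const_zero, add_zero, zero_add]
    rw [Finset.sum_eq_single (φ v) _ (by simp)]
    · by_cases hv : v ∈ S (φ v)
      · simpa [hv] using sum_indicator_cluster hCU hCcover hCdisj v
      · simp [hv]
    · intro i _ hi
      exact Finset.sum_eq_zero fun j _ => if_neg fun h => hi (hS i v h.1).symm

/-- Every color class of an equitable coloring has at least `⌊n/k⌋` vertices. -/
theorem IsEquitable.div_le_card {V : Type*} [Fintype V] {k : ℕ} (hk : 1 ≤ k) {φ : V → Fin k}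
    (h : IsEquitable φ) (i : Fin k) :
    Fintype.card V / k ≤ (Finset.univ.filter fun v => φ v = i).card := by
  rcases h i with h | h
  · exact h.ge
  · exact h ▸ Nat.div_le_div_right (by omega)

/-- If `G` admits an equitable `k`-coloring extending the proper coloring `φ'` of the
cluster modulator `U`, then the network `H` admits a feasible flow saturating every arc
leaving the source, i.e. with `f (src, col i) = ℓ = ⌊n/k⌋` for every color `i`. -/
theorem stmt10 {V : Type*} [Fintype V] [DecidableEq V] (G : SimpleGraph V)
    (k r : ℕ) (hk : 1 ≤ k) (U : Finset V) (C : Fin r → Set V)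
    (hCU : ∀ j : Fin r, ∀ v ∈ C j, v ∉ U)
    (hCne : ∀ j : Fin r, (C j).Nonempty)
    (hCcover : ∀ v : V, v ∉ U → ∃ j : Fin r, v ∈ C j)
    (hCdisj : ∀ j j' : Fin r, j ≠ j' → Disjoint (C j) (C j'))
    (hCclique : ∀ j : Fin r, ∀ u ∈ C j, ∀ v ∈ C j, u ≠ v → G.Adj u v)
    (hCsep : ∀ j j' : Fin r, j ≠ j' → ∀ u ∈ C j, ∀ v ∈ C j', ¬ G.Adj u v)
    (φ' : V → Fin k)
    (hφ' : ∀ u ∈ U, ∀ v ∈ U, G.Adj u v → φ' u ≠ φ' v)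
    (hcol : ∃ φ : V → Fin k, IsProperColoring G φ ∧ IsEquitable φ ∧
      ∀ u ∈ U, φ u = φ' u) :
    ∃ f : FNode V k r × FNode V k r → ℕ,
      (∀ e, e ∉ FArc G U C φ' → f e = 0) ∧
      (∀ e, f e ≤ FCap U φ' (Fintype.card V / k) e) ∧
      FConserve f ∧
      ∀ i : Fin k, f (.src, .col i) = Fintype.card V / k := by
  classical
  obtain ⟨φ, hproper, hequit, hext⟩ := hcol
  choose S hSsub hScard using fun i => Finset.exists_subset_card_eq (hequit.div_le_card hk i)
  have hS : ∀ i, ∀ v ∈ S i, φ v = i := fun i v hv => (Finset.mem_filter.mp (hSsub i hv)).2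
  refine ⟨selectionFlow U C φ S, ?_, ?_, selectionFlow_conserve hCU hCcover hCdisj hS, hScard⟩
  · intro e
    contrapose!
    intro he
    unfold selectionFlow at he
    split at he
    · exact .inl ⟨_, rfl⟩
    · exact .inr (.inl ⟨_, rfl⟩)
    · obtain ⟨rfl, -⟩ := ite_ne_right_iff.mp he
      exact .inr (.inr (.inl ⟨_, _, rfl⟩))
    · obtain ⟨⟨hvS, hvC⟩, -⟩ := ite_ne_right_iff.mp he
      refine .inr (.inr (.inr (.inl ⟨_, _, _, hvC, fun u hu hadj h => ?_, rfl⟩)))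
      exact hproper _ _ hadj (by rw [hS _ _ hvS, hext u hu, h])
    · obtain ⟨⟨-, hvU⟩, -⟩ := ite_ne_right_iff.mp he
      exact .inr (.inr (.inr (.inr ⟨_, hvU, rfl⟩)))
    · exact absurd rfl he
  · intro e
    unfold selectionFlow
    split
    · exact (hScard _).le
    · refine Finset.card_le_card fun v hv => ?_
      obtain ⟨hvS, hvU⟩ := Finset.mem_filter.mp hv
      exact Finset.mem_filter.mpr ⟨hvU, by rw [← hext v hvU, hS _ v hvS]⟩
    · split_ifs
      · refine Finset.card_le_one.mpr fun u hu v hv => ?_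
        obtain ⟨huS, huC⟩ := Finset.mem_filter.mp hu
        obtain ⟨hvS, hvC⟩ := Finset.mem_filter.mp hv
        by_contra hne
        exact hproper u v (hCclique _ u huC v hvC hne) (by rw [hS _ u huS, hS _ v hvS])
      · exact Nat.zero_le _
    · simp only [FCap]
      split_ifs <;> simp
    · simp only [FCap]
      split_ifs <;> simp
    · exact Nat.zero_le _
end

section
/- Let G, n, k, ℓ, U, C_1, …, C_r, φ′, the network H, and the capacity function c be as in the flow-network construction for a cluster modulator. Then G admits an equitable k-coloring whose restriction to U equals φ′ if and only if there exists a function f from the arcs of H to the natural numbers satisfying flow conservation at every node other than s and t, ℓ ≤ f((s, a_i)) ≤ ℓ + 1 for every i ∈ {1, …, k}, f(e) ≤ c(e) for every arc e not of the form (s, a_i), and total value (the sum of f over the arcs leaving s) equal to n. -/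
namespace FNode

/-- The nodes of the network, sorted by kind. -/
def equivSum (V : Type*) (k r : ℕ) :
    FNode V k r ≃ Unit ⊕ Unit ⊕ Fin k ⊕ (Fin k × Fin r) ⊕ V where
  toFun
    | .src => .inl ()
    | .snk => .inr (.inl ())
    | .col i => .inr (.inr (.inl i))
    | .clu i j => .inr (.inr (.inr (.inl (i, j))))
    | .ver v => .inr (.inr (.inr (.inr v)))
  invFun
    | .inl _ => .src
    | .inr (.inl _) => .snk
    | .inr (.inr (.inl i)) => .col i
    | .inr (.inr (.inr (.inl p))) => .clu p.1 p.2
    | .inr (.inr (.inr (.inr v))) => .ver v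
  left_inv x := by cases x <;> rfl
  right_inv x := by rcases x with _ | _ | _ | _ | _ <;> rfl

theorem sum_univ {V : Type*} [Fintype V] {k r : ℕ} (g : FNode V k r → ℕ) :
    ∑ y, g y = g .src + (g .snk + (∑ i, g (.col i) + (∑ i, ∑ j, g (.clu i j) +
      ∑ v, g (.ver v)))) := by
  rw [← (equivSum V k r).symm.sum_comp g]
  simp [Fintype.sum_sum_type, Fintype.sum_prod_type, equivSum]

end FNode

open Classical in
/-- A vertex outside `U` lies in exactly one cluster, and a vertex of `U` in none. -/
theorem sum_ite_mem_cluster {V : Type*} [DecidableEq V] {r : ℕ} {U : Finset V}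
    {C : Fin r → Set V} (hCU : ∀ j, ∀ v ∈ C j, v ∉ U)
    (hCcover : ∀ v, v ∉ U → ∃ j, v ∈ C j)
    (hCdisj : ∀ j j', j ≠ j' → Disjoint (C j) (C j')) (v : V) :
    ∑ j, (if v ∈ C j then 1 else 0) = if v ∈ U then 0 else 1 := by
  split_ifs with hv
  · exact Finset.sum_eq_zero fun j _ => if_neg fun h => hCU j v h hv
  · obtain ⟨j, hj⟩ := hCcover v hv
    rw [Finset.sum_eq_single j, if_pos hj]
    · exact fun j' _ h => if_neg fun h' => Set.disjoint_left.1 (hCdisj j' j h) h' hj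
    · simp

theorem card_add_pred_div_le {k : ℕ} (n : ℕ) (hk : 1 ≤ k) :
    n / k ≤ (n + k - 1) / k ∧ (n + k - 1) / k ≤ n / k + 1 := by
  refine ⟨Nat.div_le_div_right (by omega), ?_⟩
  rw [← Nat.add_div_right n hk]
  exact Nat.div_le_div_right (by omega)

/-- Color classes with sizes `⌊n/k⌋` or `⌊n/k⌋ + 1` are equitable. -/
theorem isEquitable_of_card_bounds {V : Type*} [Fintype V] {k : ℕ} {φ : V → Fin k}
    (hk : 1 ≤ k)
    (h : ∀ i, Fintype.card V / k ≤ (Finset.univ.filter fun v => φ v = i).card ∧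
      (Finset.univ.filter fun v => φ v = i).card ≤ Fintype.card V / k + 1) :
    IsEquitable φ := by
  intro i
  by_contra! hne
  have hi : (Finset.univ.filter fun v => φ v = i).card = Fintype.card V / k + 1 := by
    have := h i
    omega
  have hsum : Fintype.card V = ∑ i, (Finset.univ.filter fun v => φ v = i).card :=
    Finset.card_eq_sum_card_fiberwise fun v _ => Finset.mem_univ _
  have hlt : ∑ _i : Fin k, Fintype.card V / k < Fintype.card V := by
    conv_rhs => rw [hsum]
    exact Finset.sum_lt_sum (fun i _ => (h i).1) ⟨i, Finset.mem_univ _, by omega⟩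
  rw [Finset.sum_const, Finset.card_univ, Fintype.card_fin, smul_eq_mul] at hlt
  refine hne.2 (hi.trans (le_antisymm ?_ (card_add_pred_div_le _ hk).2))
  rw [Nat.le_div_iff_mul_le hk, add_mul, one_mul, mul_comm]
  omega

/-- If each vertex outside `U` receives one unit and each vertex of `U` none, then giving every
vertex outside `U` the color its unit comes from defines a coloring extending `φ'`. -/
theorem exists_coloring_of_sum_eq {V : Type*} [DecidableEq V] {k : ℕ} {U : Finset V}
    {d : Fin k → V → ℕ}
    (hd : ∀ v, ∑ i, d i v = if v ∈ U then 0 else 1) (φ' : V → Fin k) :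
    ∃ φ : V → Fin k, (∀ u ∈ U, φ u = φ' u) ∧
      ∀ i v, d i v = if v ∉ U ∧ φ v = i then 1 else 0 := by
  have hex (v) : ∃ c : Fin k, (v ∈ U → c = φ' v) ∧
      ∀ i, d i v = if v ∉ U ∧ c = i then 1 else 0 := by
    by_cases hv : v ∈ U
    · refine ⟨φ' v, fun _ => rfl, fun i => ?_⟩
      have h0 : ∑ i, d i v = 0 := by simpa [hv] using hd v
      simpa [hv] using Finset.sum_eq_zero_iff.1 h0 i (Finset.mem_univ i)
    · have h1 : ∑ i, d i v = 1 := by simpa [hv] using hd v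
      obtain ⟨c, -, hc⟩ := Finset.exists_ne_zero_of_sum_ne_zero (h1.trans_ne one_ne_zero)
      refine ⟨c, fun h => absurd h hv, fun i => ?_⟩
      have hsplit := Finset.add_sum_erase Finset.univ (fun i => d i v) (Finset.mem_univ c)
      by_cases hi : c = i
      · subst hi
        simp only [hv, not_false_eq_true, and_self, if_true]
        omega
      · have hle := Finset.single_le_sum (f := fun i => d i v) (fun _ _ => Nat.zero_le _)
          (Finset.mem_erase.2 ⟨Ne.symm hi, Finset.mem_univ i⟩)
        simp only [hi, and_false, if_false]
        omega
  choose φ hφ hdφ using hex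
  exact ⟨φ, hφ, fun i v => hdφ v i⟩

section Network

variable {V : Type*} [Fintype V] [DecidableEq V] {G : SimpleGraph V} {k r : ℕ} {U : Finset V}
  {C : Fin r → Set V} {φ φ' : V → Fin k}

theorem sum_src_of_support {f : FNode V k r × FNode V k r → ℕ}
    (hf : ∀ e, e ∉ FArc G U C φ' → f e = 0) :
    ∑ y, f (.src, y) = ∑ i, f (.src, .col i) := by
  have h₁ : f (.src, .src) = 0 := hf _ (by simp [FArc])
  have h₂ : f (.src, .snk) = 0 := hf _ (by simp [FArc])
  have h₃ (i j) : f (.src, .clu i j) = 0 := hf _ (by simp [FArc])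
  have h₄ (v) : f (.src, .ver v) = 0 := hf _ (by simp [FArc])
  simp [FNode.sum_univ, h₁, h₂, h₃, h₄]

/-- Flow conservation, spelled out for each kind of inner node. -/
theorem fConserve_iff_of_support {f : FNode V k r × FNode V k r → ℕ}
    (hf : ∀ e, e ∉ FArc G U C φ' → f e = 0) :
    FConserve f ↔
      (∀ i, f (.src, .col i) = f (.col i, .snk) + ∑ j, f (.col i, .clu i j)) ∧
      (∀ i j, f (.col i, .clu i j) = ∑ v, f (.clu i j, .ver v)) ∧
      (∀ v, ∑ i, ∑ j, f (.clu i j, .ver v) = f (.ver v, .snk)) := by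
  have hsrc (y) : f (y, .src) = 0 := hf _ (by simp [FArc])
  have hsnk (y) : f (.snk, y) = 0 := hf _ (by simp [FArc])
  have hsclu (i j) : f (.src, .clu i j) = 0 := hf _ (by simp [FArc])
  have hsver (v) : f (.src, .ver v) = 0 := hf _ (by simp [FArc])
  have hcolcol (i i') : f (.col i, .col i') = 0 := hf _ (by simp [FArc])
  have hcolclu (i i' j) (h : i' ≠ i) : f (.col i, .clu i' j) = 0 :=
    hf _ (by simpa [FArc, eq_comm] using h)
  have hcolver (i v) : f (.col i, .ver v) = 0 := hf _ (by simp [FArc])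
  have hclusnk (i j) : f (.clu i j, .snk) = 0 := hf _ (by simp [FArc])
  have hclucol (i j i') : f (.clu i j, .col i') = 0 := hf _ (by simp [FArc])
  have hcluclu (i j i' j') : f (.clu i j, .clu i' j') = 0 := hf _ (by simp [FArc])
  have hvercol (v i) : f (.ver v, .col i) = 0 := hf _ (by simp [FArc])
  have hverclu (v i j) : f (.ver v, .clu i j) = 0 := hf _ (by simp [FArc])
  have hverver (v w) : f (.ver v, .ver w) = 0 := hf _ (by simp [FArc])
  have hout (i) : ∑ i', ∑ j, f (.col i, .clu i' j) = ∑ j, f (.col i, .clu i j) :=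
    Finset.sum_eq_single i (fun i' _ h => by simp [hcolclu i i' _ h]) (by simp)
  have hin (i j) : ∑ i', f (.col i', .clu i j) = f (.col i, .clu i j) :=
    Finset.sum_eq_single i (fun i' _ h => hcolclu i' i j h.symm) (by simp)
  refine ⟨fun h => ⟨fun i => ?_, fun i j => ?_, fun v => ?_⟩, ?_⟩
  · simpa [FNode.sum_univ, *] using h (.col i) (by simp) (by simp)
  · simpa [FNode.sum_univ, *] using h (.clu i j) (by simp) (by simp)
  · simpa [FNode.sum_univ, *] using h (.ver v) (by simp) (by simp)
  · rintro ⟨hcol, hclu, hver⟩ (_ | _ | i | ⟨i, j⟩ | v) h₁ h₂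
    · exact absurd rfl h₁
    · exact absurd rfl h₂
    · simpa [FNode.sum_univ, hsrc, hsnk, hcolcol, hcolver, hclucol, hvercol, hout] using hcol i
    · simpa [FNode.sum_univ, hsrc, hsnk, hsclu, hclusnk, hclucol, hcluclu, hverclu, hin]
        using hclu i j
    · simpa [FNode.sum_univ, hsrc, hsnk, hsver, hcolver, hvercol, hverclu, hverver] using hver v

open Classical in
/-- The flow sending one unit through every vertex along its color. -/
noncomputable def colorFlow (U : Finset V) (C : Fin r → Set V) (φ : V → Fin k) :
    FNode V k r × FNode V k r → ℕ
  | (.src, .col i) => (Finset.univ.filter fun v => φ v = i).card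
  | (.col i, .snk) => (U.filter fun v => φ v = i).card
  | (.col i, .clu i' j) =>
      if i = i' then (Finset.univ.filter fun v => v ∈ C j ∧ φ v = i).card else 0
  | (.clu i j, .ver v) => if v ∈ C j ∧ φ v = i then 1 else 0
  | (.ver v, .snk) => if v ∈ U then 0 else 1
  | _ => 0

theorem colorFlow_support (hφ : IsProperColoring G φ)
    (hext : ∀ u ∈ U, φ u = φ' u) (e : FNode V k r × FNode V k r) (he : e ∉ FArc G U C φ') :
    colorFlow U C φ e = 0 := by
  obtain ⟨x, y⟩ := e
  cases x <;> cases y <;> simp only [colorFlow] <;> simp [FArc] at he ⊢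
  · grind
  · intro hv hi
    obtain ⟨u, hu, huv, hui⟩ := he hv
    exact hφ _ _ huv (by rw [hi, hext u hu, hui])
  · exact he

theorem card_colorClass (U : Finset V) (φ : V → Fin k) (i : Fin k) :
    (Finset.univ.filter fun v => φ v = i).card =
      (U.filter fun v => φ v = i).card + ∑ v, if v ∉ U ∧ φ v = i then 1 else 0 := by
  rw [← Finset.card_filter, ← Finset.card_union_of_disjoint]
  · congr 1
    ext v
    simp
    tauto
  · rw [Finset.disjoint_left]
    simp +contextual

theorem colorFlow_conserve (hCU : ∀ j, ∀ v ∈ C j, v ∉ U)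
    (hCcover : ∀ v, v ∉ U → ∃ j, v ∈ C j)
    (hCdisj : ∀ j j', j ≠ j' → Disjoint (C j) (C j')) (hφ : IsProperColoring G φ) :
    FConserve (colorFlow U C φ) := by
  classical
  have hone := sum_ite_mem_cluster hCU hCcover hCdisj
  refine (fConserve_iff_of_support (colorFlow_support hφ fun _ _ => rfl)).2
    ⟨fun i => ?_, fun i j => ?_, fun v => ?_⟩
  · simp only [colorFlow, if_true, Finset.card_filter _ Finset.univ]
    rw [← Finset.card_filter, card_colorClass U, Finset.sum_comm]
    congr 1
    refine Finset.sum_congr rfl fun v _ => ?_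
    by_cases hi : φ v = i
    · simpa [hi] using (hone v).symm
    · simp [hi]
  · simp [colorFlow]
  · simp only [colorFlow]
    rw [Finset.sum_comm, ← hone v]
    refine Finset.sum_congr rfl fun j _ => ?_
    by_cases hj : v ∈ C j <;> simp [hj]

theorem colorFlow_le_cap (hCclique : ∀ j, ∀ u ∈ C j, ∀ v ∈ C j, u ≠ v → G.Adj u v)
    (hφ : IsProperColoring G φ) (hext : ∀ u ∈ U, φ u = φ' u) (ℓ : ℕ)
    (e : FNode V k r × FNode V k r) (he : ∀ i, e ≠ (.src, .col i)) :
    colorFlow U C φ e ≤ FCap U φ' ℓ e := by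
  classical
  obtain ⟨x, y⟩ := e
  cases x <;> cases y <;> simp only [colorFlow, FCap] <;> try omega
  · simp at he
  · exact (congrArg Finset.card (Finset.filter_congr fun u hu => by rw [hext u hu])).le
  · split_ifs
    · refine Finset.card_le_one.2 fun u hu v hv => ?_
      simp only [Finset.mem_filter, Finset.mem_univ, true_and] at hu hv
      by_contra h
      exact hφ u v (hCclique _ u hu.1 v hv.1 h) (hu.2.trans hv.2.symm)
    · exact Nat.zero_le _
  all_goals split_ifs <;> omega

theorem card_eq_sum_capacities (U : Finset V) (φ' : V → Fin k) :
    Fintype.card V = ∑ i, (U.filter fun v => φ' v = i).card + ∑ v, if v ∈ U then 0 else 1 := by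
  have hU : U.card = ∑ i, (U.filter fun v => φ' v = i).card :=
    Finset.card_eq_sum_card_fiberwise fun v _ => Finset.mem_univ _
  have hUc : ∑ v, (if v ∈ U then 0 else 1) = Uᶜ.card := by
    simp [Finset.sum_ite, Finset.filter_not, Finset.compl_eq_univ_sdiff]
  rw [← hU, hUc, Finset.card_add_card_compl]

/-- A flow of value `n` saturates every arc into the sink. -/
theorem saturated_of_value {f : FNode V k r × FNode V k r → ℕ} {ℓ : ℕ}
    (hf : ∀ e, e ∉ FArc G U C φ' → f e = 0) (hcons : FConserve f)
    (hcap : ∀ e : FNode V k r × FNode V k r, (∀ i, e ≠ (.src, .col i)) → f e ≤ FCap U φ' ℓ e)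
    (hval : ∑ y, f (.src, y) = Fintype.card V) :
    (∀ i, f (.col i, .snk) = (U.filter fun v => φ' v = i).card) ∧
      ∀ v, f (.ver v, .snk) = if v ∈ U then 0 else 1 := by
  obtain ⟨hcol, hclu, hver⟩ := (fConserve_iff_of_support hf).1 hcons
  have hc (i) : f (.col i, .snk) ≤ (U.filter fun v => φ' v = i).card := hcap _ (by simp)
  have hv (v) : f (.ver v, .snk) ≤ if v ∈ U then 0 else 1 := by
    split_ifs with h
    · exact (hf _ (by simpa [FArc] using h)).le
    · exact hcap (.ver v, .snk) (by simp)
  have htotal : Fintype.card V = ∑ i, f (.col i, .snk) + ∑ v, f (.ver v, .snk) := by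
    rw [← hval, sum_src_of_support hf]
    simp_rw [hcol, Finset.sum_add_distrib, hclu, ← hver]
    congr 1
    rw [Finset.sum_comm (s := (Finset.univ : Finset V))]
    exact Finset.sum_congr rfl fun i _ => Finset.sum_comm
  have hmax := card_eq_sum_capacities U φ'
  have hc' := Finset.sum_le_sum fun i (_ : i ∈ Finset.univ) => hc i
  have hv' := Finset.sum_le_sum fun v (_ : v ∈ Finset.univ) => hv v
  have hceq := (Finset.sum_eq_sum_iff_of_le fun i (_ : i ∈ Finset.univ) => hc i).1 (by omega)
  have hveq := (Finset.sum_eq_sum_iff_of_le fun v (_ : v ∈ Finset.univ) => hv v).1 (by omega)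
  exact ⟨fun i => hceq i (Finset.mem_univ _), fun v => hveq v (Finset.mem_univ _)⟩

end Network

/-- `G` admits an equitable `k`-coloring extending the proper coloring `φ'` of the cluster
modulator `U` if and only if the network `H` admits a flow `f` satisfying conservation,
`ℓ ≤ f (src, col i) ≤ ℓ + 1` for every color `i`, `f e ≤ c e` on every arc not of the form
`(src, col i)`, and total value (the flow out of the source) equal to `n`. -/
theorem stmt11 {V : Type*} [Fintype V] [DecidableEq V] (G : SimpleGraph V)
    (k r : ℕ) (hk : 1 ≤ k) (U : Finset V) (C : Fin r → Set V)
    (hCU : ∀ j : Fin r, ∀ v ∈ C j, v ∉ U)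
    (hCne : ∀ j : Fin r, (C j).Nonempty)
    (hCcover : ∀ v : V, v ∉ U → ∃ j : Fin r, v ∈ C j)
    (hCdisj : ∀ j j' : Fin r, j ≠ j' → Disjoint (C j) (C j'))
    (hCclique : ∀ j : Fin r, ∀ u ∈ C j, ∀ v ∈ C j, u ≠ v → G.Adj u v)
    (hCsep : ∀ j j' : Fin r, j ≠ j' → ∀ u ∈ C j, ∀ v ∈ C j', ¬ G.Adj u v)
    (φ' : V → Fin k)
    (hφ' : ∀ u ∈ U, ∀ v ∈ U, G.Adj u v → φ' u ≠ φ' v) :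
    (∃ φ : V → Fin k, IsProperColoring G φ ∧ IsEquitable φ ∧ ∀ u ∈ U, φ u = φ' u) ↔
    (∃ f : FNode V k r × FNode V k r → ℕ,
      (∀ e, e ∉ FArc G U C φ' → f e = 0) ∧
      FConserve f ∧
      (∀ i : Fin k, Fintype.card V / k ≤ f (.src, .col i) ∧
        f (.src, .col i) ≤ Fintype.card V / k + 1) ∧
      (∀ e : FNode V k r × FNode V k r, (∀ i : Fin k, e ≠ (.src, .col i)) →
        f e ≤ FCap U φ' (Fintype.card V / k) e) ∧
      (∑ y : FNode V k r, f (.src, y)) = Fintype.card V) := by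
  constructor
  · rintro ⟨φ, hφ, heq, hext⟩
    have hsupp := colorFlow_support (C := C) hφ hext
    refine ⟨colorFlow U C φ, hsupp, colorFlow_conserve hCU hCcover hCdisj hφ, fun i => ?_,
      colorFlow_le_cap hCclique hφ hext _, ?_⟩
    · have := card_add_pred_div_le (Fintype.card V) hk
      have hi := heq i
      simp only [colorFlow]
      omega
    · rw [sum_src_of_support hsupp]
      exact (Finset.card_eq_sum_card_fiberwise fun v _ => Finset.mem_univ _).symm
  · rintro ⟨f, hf, hcons, hbounds, hcap, hval⟩
    obtain ⟨hcol, hclu, hver⟩ := (fConserve_iff_of_support hf).1 hcons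
    obtain ⟨hcsat, hvsat⟩ := saturated_of_value hf hcons hcap hval
    obtain ⟨φ, hext, hd⟩ := exists_coloring_of_sum_eq (U := U)
      (d := fun i v => ∑ j, f (.clu i j, .ver v)) (fun v => (hver v).trans (hvsat v)) φ'
    have harc (v) (hv : v ∉ U) : ∃ j, f (.clu (φ v) j, .ver v) ≠ 0 ∧ v ∈ C j ∧
        ∀ u ∈ U, G.Adj v u → φ' u ≠ φ v := by
      obtain ⟨j, -, hj⟩ := Finset.exists_ne_zero_of_sum_ne_zero
        (((hd (φ v) v).trans (if_pos ⟨hv, rfl⟩)).trans_ne one_ne_zero)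
      have hmem := not_imp_comm.1 (hf _) hj
      simp only [FArc, Set.mem_ofPred_eq] at hmem
      exact ⟨j, hj, by simp_all⟩
    refine ⟨φ, fun u v huv heq => ?_, isEquitable_of_card_bounds hk fun i => ?_, hext⟩
    · by_cases hu : u ∈ U <;> by_cases hv : v ∈ U
      · exact hφ' u hu v hv huv (by rw [← hext u hu, ← hext v hv, heq])
      · obtain ⟨_, _, _, h⟩ := harc v hv
        exact h u hu huv.symm (by rw [← hext u hu, heq])
      · obtain ⟨_, _, _, h⟩ := harc u hu
        exact h v hv huv (by rw [← hext v hv, heq])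
      · obtain ⟨j, hju, huC, -⟩ := harc u hu
        obtain ⟨j', hjv, hvC, -⟩ := harc v hv
        obtain rfl : j = j' := by
          by_contra h
          exact hCsep j j' h u huC v hvC huv
        have hle : f (.col (φ u), .clu (φ u) j) ≤ 1 := hcap _ (by simp)
        have hpair := Finset.sum_le_sum_of_subset (f := fun w => f (.clu (φ u) j, .ver w))
          (Finset.subset_univ {u, v})
        rw [Finset.sum_pair huv.ne, ← hclu] at hpair
        rw [← heq] at hjv
        omega
    · have hclass : (Finset.univ.filter fun v => φ v = i).card = f (.src, .col i) := by
        rw [hcol, hcsat, card_colorClass U]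
        simp_rw [hclu]
        rw [Finset.sum_comm]
        congr 1
        · exact congrArg Finset.card (Finset.filter_congr fun u hu => by rw [hext u hu])
        · exact Finset.sum_congr rfl fun v _ => (hd i v).symm
      rw [hclass]
      exact hbounds i
end

section
/- Let G be a finite simple graph on n vertices, let r ≥ 1, let L be a list assignment on G with colors {1, …, r}, and let h : {1, …, r} → ℕ satisfy h(1) + ⋯ + h(r) = n. Let h* = max_i h(i), and let G′ be the graph obtained from G by adding, for each color i, a set D_i of h* − h(i) new isolated vertices, with the list assignment L′ extending L by L′(d) = {i} for every d ∈ D_i. Then G admits a proper coloring φ respecting L with |φ⁻¹(i)| = h(i) for every color i, if and only if G′ admits a proper coloring φ′ respecting L′ in which every color class has size exactly h* (equivalently, an equitable r-coloring of G′ respecting L′, since G′ has r·h* vertices). -/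
/-- The graph obtained from `G` by adding, for each index `i`, a family `D i` of `m i` new
isolated vertices. -/
def addIsolatedFam {V : Type*} (G : SimpleGraph V) {ι : Type*} (m : ι → ℕ) :
    SimpleGraph (V ⊕ Σ i : ι, Fin (m i)) :=
  SimpleGraph.fromRel fun a b =>
    match a, b with
    | Sum.inl u, Sum.inl v => G.Adj u v
    | _, _ => False

theorem addIsolatedFam_adj_inl {V ι : Type*} (G : SimpleGraph V) (m : ι → ℕ) (u v : V) :
    (addIsolatedFam G m).Adj (Sum.inl u) (Sum.inl v) ↔ G.Adj u v := by
  simp only [addIsolatedFam, SimpleGraph.fromRel_adj, ne_eq, Sum.inl.injEq]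
  exact ⟨fun ⟨_, huv⟩ => huv.elim id SimpleGraph.Adj.symm, fun huv => ⟨huv.ne, Or.inl huv⟩⟩

theorem isProperColoring_addIsolatedFam_iff {V ι : Type*} {k : ℕ} (G : SimpleGraph V)
    (m : ι → ℕ) (ψ : (V ⊕ Σ i : ι, Fin (m i)) → Fin k) :
    IsProperColoring (addIsolatedFam G m) ψ ↔ IsProperColoring G (ψ ∘ Sum.inl) := by
  refine ⟨fun hψ u v huv => hψ _ _ ((addIsolatedFam_adj_inl G m u v).2 huv), ?_⟩
  rintro hψ (u | d) (v | e) huv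
  · exact hψ u v ((addIsolatedFam_adj_inl G m u v).1 huv)
  all_goals simp [addIsolatedFam] at huv

/-- If every vertex of the `i`-th added family gets color `i`, then color class `i` gains
exactly `m i` vertices. -/
theorem card_colorClass_sum {V ι : Type*} [Fintype V] [Fintype ι] [DecidableEq ι]
    (m : ι → ℕ) (ψ : (V ⊕ Σ i : ι, Fin (m i)) → ι) (hψ : ∀ d, ψ (Sum.inr d) = d.1) (i : ι) :
    (Finset.univ.filter fun z => ψ z = i).card =
      (Finset.univ.filter fun v => ψ (Sum.inl v) = i).card + m i := by
  simp only [Finset.card_filter, Fintype.sum_sum_type, hψ, Fintype.sum_sigma]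
  rw [Fintype.sum_eq_single i fun j hj => by simp [hj]]
  simp

/-- `G` admits a proper coloring respecting the list assignment `L` in which color `i` is
used exactly `h i` times, if and only if the graph `G'` obtained by adding, for each color
`i`, a set `D_i` of `h* − h i` new isolated vertices (with singleton list `{i}`) admits a
proper coloring respecting the extended lists in which every color class has size exactly
`h* = max_i h i`. -/
theorem stmt13 {V : Type*} [Fintype V] (G : SimpleGraph V) (r : ℕ) (hr : 1 ≤ r)
    (L : V → Set (Fin r)) (h : Fin r → ℕ)
    (hsum : ∑ i : Fin r, h i = Fintype.card V)
    (hstar : ℕ) (hhstar : hstar = Finset.univ.sup h) :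
    (∃ φ : V → Fin r, IsProperColoring G φ ∧ (∀ v : V, φ v ∈ L v) ∧
      ∀ i : Fin r, (Finset.univ.filter fun v => φ v = i).card = h i) ↔
    (∃ ψ : (V ⊕ Σ i : Fin r, Fin (hstar - h i)) → Fin r,
      IsProperColoring (addIsolatedFam G (fun i : Fin r => hstar - h i)) ψ ∧
      (∀ v : V, ψ (Sum.inl v) ∈ L v) ∧
      (∀ d : Σ i : Fin r, Fin (hstar - h i), ψ (Sum.inr d) = d.1) ∧
      ∀ i : Fin r, (Finset.univ.filter fun z => ψ z = i).card = hstar) := by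
  have hle (i : Fin r) : h i ≤ hstar := hhstar ▸ Finset.le_sup (Finset.mem_univ i)
  constructor
  · rintro ⟨φ, hφ, hL, hcard⟩
    refine ⟨Sum.elim φ Sigma.fst, (isProperColoring_addIsolatedFam_iff _ _ _).2 hφ, hL,
      fun _ => rfl, fun i => ?_⟩
    rw [card_colorClass_sum _ _ (fun _ => rfl)]
    exact (congrArg (· + (hstar - h i)) (hcard i)).trans (Nat.add_sub_of_le (hle i))
  · rintro ⟨ψ, hψ, hL, hD, hcard⟩
    refine ⟨ψ ∘ Sum.inl, (isProperColoring_addIsolatedFam_iff _ _ _).1 hψ, hL, fun i => ?_⟩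
    have hi := hcard i
    rw [card_colorClass_sum _ _ hD] at hi
    have := hle i
    simp only [Function.comp_apply]
    omega
end

section
/- Fix integers k ≥ 1, q ≥ 1, N ≥ 1, lists L_1, …, L_q with each L_j a nonempty subset of {1, …, k}, and targets η : {1, …, k} → ℕ. Let F be the graph consisting of N pairwise disjoint paths A_1, …, A_N, each with vertex sequence a_1, …, a_q, where vertex a_j of every path has admissible color set L_j. Consider the directed network H with nodes s, t, and nodes u_{j,i}, v_{j,i} for each j ∈ {1, …, q} and i ∈ L_j, and arcs: (s, u_{1,i}) for each i ∈ L_1; (u_{j,i}, v_{j,i}) for each j and i ∈ L_j; (v_{j,i}, u_{j+1,a}) for each j < q, i ∈ L_j, a ∈ L_{j+1} with a ≠ i; and (v_{q,i}, t) for each i ∈ L_q; every arc has capacity N. Then F admits a proper coloring in which the j-th vertex of each path receives a color from L_j and each color i is used exactly η(i) times in total, if and only if there is a function x from the arcs of H to the natural numbers satisfying: flow conservation at every node other than s and t; total flow out of s and total flow into t both equal to N; for every color i, the sum of x over the arcs (u_{j,i}, v_{j,i}) with j ∈ {1, …, q} and i ∈ L_j equals η(i); and 0 ≤ x(e) ≤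 N for every arc e. -/
/-- The graph consisting of `N` pairwise disjoint paths, each with `q` vertices: vertex
`(a, j)` is the `j`-th vertex of the `a`-th path, and edges join consecutive vertices of
the same path. -/
def pathsGraph (N q : ℕ) : SimpleGraph (Fin N × Fin q) :=
  SimpleGraph.fromRel fun p p' => p.1 = p'.1 ∧ p.2.val + 1 = p'.2.val

/-- The nodes of the flow network `H`: a source, a sink, and nodes `up j i`, `vp j i` for
each position `j` and color `i`. -/
inductive PNode (k q : ℕ) where
  | src : PNode k q
  | snk : PNode k q
  | up : Fin q → Fin k → PNode k q
  | vp : Fin q → Fin k → PNode k q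
  deriving DecidableEq, Fintype

/-- The arcs of the flow network `H`: `(src, up 0 i)` for `i ∈ L 0`; `(up j i, vp j i)` for
`i ∈ L j`; `(vp j i, up (j+1) a)` for `i ∈ L j`, `a ∈ L (j+1)`, `a ≠ i`; and
`(vp (q-1) i, snk)` for `i ∈ L (q-1)`. -/
def PArc (k q : ℕ) (L : Fin q → Finset (Fin k)) : Set (PNode k q × PNode k q) :=
  {e | (∃ (j : Fin q) (i : Fin k), j.val = 0 ∧ i ∈ L j ∧ e = (.src, .up j i)) ∨
       (∃ (j : Fin q) (i : Fin k), i ∈ L j ∧ e = (.up j i, .vp j i)) ∨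
       (∃ (j j' : Fin q) (i a : Fin k), j.val + 1 = j'.val ∧ i ∈ L j ∧ a ∈ L j' ∧
          a ≠ i ∧ e = (.vp j i, .up j' a)) ∨
       (∃ (j : Fin q) (i : Fin k), j.val = q - 1 ∧ i ∈ L j ∧ e = (.vp j i, .snk))}

section Fibers

variable {A K : Type*} [Fintype A] [Fintype K] [DecidableEq K]

/-- A finite type can be mapped with prescribed fiber sizes as soon as they sum to its size. -/
theorem exists_card_fiber_eq (m : K → ℕ) (h : ∑ i, m i = Fintype.card A) :
    ∃ g : A → K, ∀ i, (Finset.univ.filter fun a => g a = i).card = m i := by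
  classical
  obtain ⟨e⟩ : Nonempty (A ≃ Σ i, Fin (m i)) := by
    rw [← Fintype.card_eq]
    simp [h]
  refine ⟨fun a => (e a).1, fun i => ?_⟩
  rw [← Fintype.card_subtype]
  have e' : {a // (e a).1 = i} ≃ Fin (m i) :=
    (e.subtypeEquiv (q := fun s => s.1 = i) fun _ => Iff.rfl).trans
      (Equiv.sigmaSubtype i)
  simpa using Fintype.card_congr e'

/-- Given `f` whose fiber sizes are the row sums of `M`, some `g` has joint fiber sizes `M`. -/
theorem exists_card_joint_fiber_eq (f : A → K) (M : K → K → ℕ)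
    (h : ∀ i, (Finset.univ.filter fun a => f a = i).card = ∑ i', M i i') :
    ∃ g : A → K, ∀ i i', (Finset.univ.filter fun a => f a = i ∧ g a = i').card = M i i' := by
  classical
  have key : ∀ i, ∃ g : {a // f a = i} → K,
      ∀ i', (Finset.univ.filter fun a => g a = i').card = M i i' := fun i =>
    exists_card_fiber_eq (M i) (by rw [Fintype.card_subtype, h])
  choose g hg using key
  refine ⟨fun a => g (f a) ⟨a, rfl⟩, fun i i' => ?_⟩
  rw [← hg i i', ← Finset.card_map (Function.Embedding.subtype _)]
  congr 1
  ext a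
  simp only [Finset.mem_filter, Finset.mem_univ, true_and, Finset.mem_map,
    Function.Embedding.subtype_apply, Subtype.exists, exists_and_right, exists_eq_right]
  constructor
  · rintro ⟨rfl, h⟩
    exact ⟨rfl, h⟩
  · rintro ⟨rfl, h⟩
    exact ⟨rfl, h⟩

theorem sum_card_joint_fiber_right (f g : A → K) (i : K) :
    ∑ i', (Finset.univ.filter fun a => f a = i ∧ g a = i').card =
      (Finset.univ.filter fun a => f a = i).card := by
  rw [Finset.card_eq_sum_card_fiberwise (f := g) (t := Finset.univ) (by simp)]
  simp [Finset.filter_filter]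

theorem sum_card_joint_fiber_left (f g : A → K) (i' : K) :
    ∑ i, (Finset.univ.filter fun a => f a = i ∧ g a = i').card =
      (Finset.univ.filter fun a => g a = i').card := by
  simpa only [and_comm] using sum_card_joint_fiber_right g f i'

/-- A layered flow decomposes into paths: if the transition counts `M j` have row sums `c j` and
column sums `c (j + 1)`, they are realized by a sequence of maps on a type of size `∑ i, c 0 i`. -/
theorem exists_layered_paths (n : ℕ) (c : ℕ → K → ℕ) (M : ℕ → K → K → ℕ)
    (h0 : ∑ i, c 0 i = Fintype.card A)
    (hrow : ∀ j < n, ∀ i, ∑ i', M j i i' = c j i)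
    (hcol : ∀ j < n, ∀ i', ∑ i, M j i i' = c (j + 1) i') :
    ∃ φ : ℕ → A → K,
      (∀ j ≤ n, ∀ i, (Finset.univ.filter fun a => φ j a = i).card = c j i) ∧
      (∀ j < n, ∀ i i',
        (Finset.univ.filter fun a => φ j a = i ∧ φ (j + 1) a = i').card = M j i i') := by
  induction n with
  | zero =>
    obtain ⟨g, hg⟩ := exists_card_fiber_eq (c 0) h0
    refine ⟨fun _ => g, fun j hj i => ?_, by simp⟩
    obtain rfl : j = 0 := by omega
    exact hg i
  | succ n ih =>
    obtain ⟨φ, hφ, hM⟩ := ih (fun j hj => hrow j (by omega)) (fun j hj => hcol j (by omega))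
    obtain ⟨g, hg⟩ := exists_card_joint_fiber_eq (φ n) (M n) fun i => by
      rw [hφ n le_rfl, hrow n (by omega)]
    refine ⟨Function.update φ (n + 1) g, fun j hj i => ?_, fun j hj i i' => ?_⟩
    · rcases Nat.le_succ_iff.1 hj with hj' | rfl
      · simpa [Function.update_of_ne (show j ≠ n + 1 by omega)] using hφ j hj' i
      · rw [← hcol n (by omega), Function.update_self, ← sum_card_joint_fiber_left (φ n) g i]
        exact Finset.sum_congr rfl fun i' _ => hg i' i
    · rw [Function.update_of_ne (show j ≠ n + 1 by omega)]
      rcases Nat.lt_succ_iff_lt_or_eq.1 hj with hj' | rfl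
      · simpa [Function.update_of_ne (show j + 1 ≠ n + 1 by omega)] using hM j hj' i i'
      · simpa using hg i i'

end Fibers

section ArcSums

variable {k n : ℕ} {L : Fin (n + 1) → Finset (Fin k)}
  {x : PNode k (n + 1) × PNode k (n + 1) → ℕ}

theorem sum_out_src (hx : ∀ e, e ∉ PArc k (n + 1) L → x e = 0) :
    ∑ y, x (.src, y) = ∑ i, x (.src, .up 0 i) := by
  refine (Fintype.sum_of_injective (PNode.up 0) (fun _ _ h => by simpa using h) _ _
    (fun y hy => hx _ ?_) fun _ => rfl).symm
  rintro (⟨j, i, hj, -, h⟩ | ⟨j, i, -, h⟩ | ⟨j, j', i, a, -, -, -, -, h⟩ | ⟨j, i, -, -, h⟩) <;>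
    simp only [Prod.mk.injEq, reduceCtorEq, false_and] at h
  obtain rfl : j = 0 := Fin.ext hj
  exact hy ⟨i, h.2.symm⟩

theorem sum_in_snk (hx : ∀ e, e ∉ PArc k (n + 1) L → x e = 0) :
    ∑ y, x (y, .snk) = ∑ i, x (.vp (Fin.last n) i, .snk) := by
  refine (Fintype.sum_of_injective (PNode.vp (Fin.last n)) (fun _ _ h => by simpa using h) _
    (fun y => x (y, .snk)) (fun y hy => hx _ ?_) fun _ => rfl).symm
  rintro (⟨j, i, hj, -, h⟩ | ⟨j, i, -, h⟩ | ⟨j, j', i, a, -, -, -, -, h⟩ | ⟨j, i, hj, -, h⟩) <;>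
    simp only [Prod.mk.injEq, reduceCtorEq, and_false] at h
  obtain rfl : j = Fin.last n := Fin.ext hj
  exact hy ⟨i, h.1.symm⟩

theorem sum_in_up_zero (hx : ∀ e, e ∉ PArc k (n + 1) L → x e = 0) (i : Fin k) :
    ∑ y, x (y, .up 0 i) = x (.src, .up 0 i) := by
  refine Fintype.sum_eq_single _ fun y hy => hx _ ?_
  rintro (⟨j, i, hj, -, h⟩ | ⟨j, i, -, h⟩ | ⟨j, j', i, a, hj, -, -, -, h⟩ | ⟨j, i, hj, -, h⟩) <;>
    simp only [Prod.mk.injEq, reduceCtorEq, and_false, PNode.up.injEq] at h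
  · exact hy h.1
  · simp [← h.2.1] at hj

theorem sum_in_up_succ (hx : ∀ e, e ∉ PArc k (n + 1) L → x e = 0) (j : Fin n) (i : Fin k) :
    ∑ y, x (y, .up j.succ i) = ∑ i', x (.vp j.castSucc i', .up j.succ i) := by
  refine (Fintype.sum_of_injective (PNode.vp j.castSucc) (fun _ _ h => by simpa using h) _
    (fun y => x (y, .up j.succ i)) (fun y hy => hx _ ?_) fun _ => rfl).symm
  rintro (⟨l, a, hl, -, h⟩ | ⟨l, a, -, h⟩ | ⟨l, l', a, b, hl, -, -, -, h⟩ | ⟨l, a, hl, -, h⟩) <;>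
    simp only [Prod.mk.injEq, reduceCtorEq, and_false, PNode.up.injEq] at h
  · simp [← h.2.1] at hl
  · obtain rfl : l = j.castSucc := Fin.ext (by simpa [← h.2.1] using hl)
    exact hy ⟨a, h.1.symm⟩

theorem sum_out_up (hx : ∀ e, e ∉ PArc k (n + 1) L → x e = 0) (j : Fin (n + 1)) (i : Fin k) :
    ∑ y, x (.up j i, y) = x (.up j i, .vp j i) := by
  refine Fintype.sum_eq_single _ fun y hy => hx _ ?_
  rintro (⟨l, a, hl, -, h⟩ | ⟨l, a, -, h⟩ | ⟨l, l', a, b, hl, -, -, -, h⟩ | ⟨l, a, hl, -, h⟩) <;>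
    simp only [Prod.mk.injEq, reduceCtorEq, false_and, PNode.up.injEq] at h
  obtain ⟨⟨rfl, rfl⟩, rfl⟩ := h
  exact hy rfl

theorem sum_in_vp (hx : ∀ e, e ∉ PArc k (n + 1) L → x e = 0) (j : Fin (n + 1)) (i : Fin k) :
    ∑ y, x (y, .vp j i) = x (.up j i, .vp j i) := by
  refine Fintype.sum_eq_single _ fun y hy => hx _ ?_
  rintro (⟨l, a, hl, -, h⟩ | ⟨l, a, -, h⟩ | ⟨l, l', a, b, hl, -, -, -, h⟩ | ⟨l, a, hl, -, h⟩) <;>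
    simp only [Prod.mk.injEq, reduceCtorEq, and_false, PNode.vp.injEq] at h
  obtain ⟨rfl, rfl, rfl⟩ := h
  exact hy rfl

theorem sum_out_vp_castSucc (hx : ∀ e, e ∉ PArc k (n + 1) L → x e = 0) (j : Fin n)
    (i : Fin k) :
    ∑ y, x (.vp j.castSucc i, y) = ∑ i', x (.vp j.castSucc i, .up j.succ i') := by
  refine (Fintype.sum_of_injective (PNode.up j.succ) (fun _ _ h => by simpa using h) _
    (fun y => x (.vp j.castSucc i, y)) (fun y hy => hx _ ?_) fun _ => rfl).symm
  rintro (⟨l, a, hl, -, h⟩ | ⟨l, a, -, h⟩ | ⟨l, l', a, b, hl, -, -, -, h⟩ | ⟨l, a, hl, -, h⟩) <;>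
    simp only [Prod.mk.injEq, reduceCtorEq, false_and, PNode.vp.injEq] at h
  · obtain rfl : l' = j.succ := Fin.ext (by simpa [← h.1.1] using hl.symm)
    exact hy ⟨b, h.2.symm⟩
  · have := j.isLt
    simp only [← h.1.1, Fin.val_castSucc] at hl
    omega

theorem sum_out_vp_last (hx : ∀ e, e ∉ PArc k (n + 1) L → x e = 0) (i : Fin k) :
    ∑ y, x (.vp (Fin.last n) i, y) = x (.vp (Fin.last n) i, .snk) := by
  refine Fintype.sum_eq_single _ fun y hy => hx _ ?_
  rintro (⟨l, a, hl, -, h⟩ | ⟨l, a, -, h⟩ | ⟨l, l', a, b, hl, -, -, -, h⟩ | ⟨l, a, hl, -, h⟩) <;>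
    simp only [Prod.mk.injEq, reduceCtorEq, false_and, PNode.vp.injEq] at h
  · have := l'.isLt
    simp only [← h.1.1, Fin.val_last] at hl
    omega
  · exact hy h.2

end ArcSums

/-- The flow sending, for every path, one unit along the nodes given by its colors. -/
def coloringFlow {k q N : ℕ} (φ : Fin N × Fin q → Fin k) : PNode k q × PNode k q → ℕ
  | (.src, .up j i) =>
    if j.val = 0 then (Finset.univ.filter fun a => φ (a, j) = i).card else 0
  | (.up j i, .vp j' i') =>
    if j = j' ∧ i = i' then (Finset.univ.filter fun a => φ (a, j) = i).card else 0
  | (.vp j i, .up j' i') =>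
    if j.val + 1 = j'.val then
      (Finset.univ.filter fun a => φ (a, j) = i ∧ φ (a, j') = i').card
    else 0
  | (.vp j i, .snk) =>
    if j.val = q - 1 then (Finset.univ.filter fun a => φ (a, j) = i).card else 0
  | _ => 0

theorem coloringFlow_le {k q N : ℕ} (φ : Fin N × Fin q → Fin k) (e : PNode k q × PNode k q) :
    coloringFlow φ e ≤ N := by
  have hcard (s : Finset (Fin N)) : s.card ≤ N := by simpa using s.card_le_univ
  unfold coloringFlow
  split <;> (try split_ifs) <;> first | exact hcard _ | exact Nat.zero_le _

theorem coloringFlow_eq_zero {k q N : ℕ} {L : Fin q → Finset (Fin k)}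
    (φ : Fin N × Fin q → Fin k)
    (hφ : ∀ (a : Fin N) (j j' : Fin q), j.val + 1 = j'.val → φ (a, j) ≠ φ (a, j'))
    (hφL : ∀ p, φ p ∈ L p.2) (e : PNode k q × PNode k q) (he : e ∉ PArc k q L) :
    coloringFlow φ e = 0 := by
  unfold coloringFlow
  split
  · split_ifs with hj
    · refine Finset.card_eq_zero.2 (Finset.filter_eq_empty_iff.2 fun a _ h => he ?_)
      exact .inl ⟨_, _, hj, h ▸ hφL (a, _), rfl⟩
    · rfl
  · split_ifs with hj
    · obtain ⟨rfl, rfl⟩ := hj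
      refine Finset.card_eq_zero.2 (Finset.filter_eq_empty_iff.2 fun a _ h => he ?_)
      exact .inr (.inl ⟨_, _, h ▸ hφL (a, _), rfl⟩)
    · rfl
  · split_ifs with hj
    · refine Finset.card_eq_zero.2 (Finset.filter_eq_empty_iff.2 fun a _ h => he ?_)
      refine .inr (.inr (.inl ⟨_, _, _, _, hj, h.1 ▸ hφL (a, _), h.2 ▸ hφL (a, _), ?_, rfl⟩))
      rw [← h.1, ← h.2]
      exact (hφ a _ _ hj).symm
    · rfl
  · split_ifs with hj
    · refine Finset.card_eq_zero.2 (Finset.filter_eq_empty_iff.2 fun a _ h => he ?_)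
      exact .inr (.inr (.inr ⟨_, _, hj, h ▸ hφL (a, _), rfl⟩))
    · rfl
  · rfl

theorem card_filter_prod_eq_sum {A B : Type*} [Fintype A] [Fintype B] (P : A × B → Prop)
    [DecidablePred P] :
    (Finset.univ.filter P).card = ∑ b, (Finset.univ.filter fun a => P (a, b)).card := by
  simp only [Finset.card_filter, Fintype.sum_prod_type_right]

/-- The collection `F` of `N` disjoint paths with `q` vertices each, where the `j`-th
vertex of every path has admissible color set `L j`, admits a proper coloring respecting
the lists and using each color `i` exactly `η i` times, if and only if the flow network
`H` admits a feasible integral flow of value `N` (with all capacities `N`) in which, for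
every color `i`, the flow through the arcs `(up j i, vp j i)` sums to `η i`. -/
theorem stmt15 (k q N : ℕ) (hk : 1 ≤ k) (hq : 1 ≤ q) (hN : 1 ≤ N)
    (L : Fin q → Finset (Fin k)) (hL : ∀ j : Fin q, (L j).Nonempty)
    (η : Fin k → ℕ) :
    (∃ φ : Fin N × Fin q → Fin k,
      (∀ p p' : Fin N × Fin q, (pathsGraph N q).Adj p p' → φ p ≠ φ p') ∧
      (∀ p : Fin N × Fin q, φ p ∈ L p.2) ∧
      (∀ i : Fin k, (Finset.univ.filter fun p : Fin N × Fin q => φ p = i).card = η i)) ↔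
    (∃ x : PNode k q × PNode k q → ℕ,
      (∀ e, e ∉ PArc k q L → x e = 0) ∧
      (∀ e, x e ≤ N) ∧
      (∀ z : PNode k q, z ≠ .src → z ≠ .snk →
        ∑ y : PNode k q, x (y, z) = ∑ y : PNode k q, x (z, y)) ∧
      (∑ y : PNode k q, x (.src, y)) = N ∧
      (∑ y : PNode k q, x (y, .snk)) = N ∧
      (∀ i : Fin k,
        ∑ j ∈ Finset.univ.filter (fun j : Fin q => i ∈ L j), x (.up j i, .vp j i) = η i)) := by
  obtain ⟨n, rfl⟩ : ∃ n, q = n + 1 := ⟨q - 1, by omega⟩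
  have hadj : ∀ (a : Fin N) (j j' : Fin (n + 1)), j.val + 1 = j'.val →
      (pathsGraph N (n + 1)).Adj (a, j) (a, j') := fun a j j' h => by
    refine (SimpleGraph.fromRel_adj _ _ _).2 ⟨fun h' => ?_, .inl ⟨rfl, h⟩⟩
    have : j.val = j'.val := congrArg (fun p => p.2.val) h'
    omega
  constructor
  · rintro ⟨φ, hφ, hφL, hη⟩
    have hx := coloringFlow_eq_zero φ (fun a j j' h => hφ _ _ (hadj a j j' h)) hφL
    have hsum (j : Fin (n + 1)) :
        ∑ i, (Finset.univ.filter fun a => φ (a, j) = i).card = N := by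
      simpa using (Finset.card_eq_sum_card_fiberwise (f := fun a => φ (a, j))
        (s := Finset.univ) (t := Finset.univ) (by simp)).symm
    refine ⟨coloringFlow φ, hx, coloringFlow_le φ, fun z hs ht => ?_, ?_, ?_, fun i => ?_⟩
    · cases z with
      | src => exact absurd rfl hs
      | snk => exact absurd rfl ht
      | up j i =>
        rw [sum_out_up hx]
        cases j using Fin.cases with
        | zero =>
          rw [sum_in_up_zero hx]
          simp [coloringFlow]
        | succ j =>
          rw [sum_in_up_succ hx]
          simpa [coloringFlow] using sum_card_joint_fiber_left
            (fun a => φ (a, j.castSucc)) (fun a => φ (a, j.succ)) i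
      | vp j i =>
        rw [sum_in_vp hx]
        cases j using Fin.lastCases with
        | last =>
          rw [sum_out_vp_last hx]
          simp [coloringFlow]
        | cast j =>
          rw [sum_out_vp_castSucc hx]
          simpa [coloringFlow] using (sum_card_joint_fiber_right
            (fun a => φ (a, j.castSucc)) (fun a => φ (a, j.succ)) i).symm
    · rw [sum_out_src hx]
      simpa [coloringFlow] using hsum 0
    · rw [sum_in_snk hx]
      simpa [coloringFlow] using hsum (Fin.last n)
    · rw [← hη i, card_filter_prod_eq_sum]
      simp only [coloringFlow, and_self, if_true]
      refine Finset.sum_filter_of_ne fun j _ hj => ?_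
      obtain ⟨a, ha⟩ := Finset.card_ne_zero.1 hj
      rw [← (Finset.mem_filter.1 ha).2]
      exact hφL (a, j)
  · rintro ⟨x, hx, -, hcons, hsrc, -, hη⟩
    have hin (j : Fin n) (i : Fin k) : ∑ i', x (.vp j.castSucc i', .up j.succ i) =
        x (.up j.succ i, .vp j.succ i) := by
      rw [← sum_in_up_succ hx, ← sum_out_up hx, hcons _ (by simp) (by simp)]
    have hout (j : Fin n) (i : Fin k) : ∑ i', x (.vp j.castSucc i, .up j.succ i') =
        x (.up j.castSucc i, .vp j.castSucc i) := by
      rw [← sum_out_vp_castSucc hx, ← sum_in_vp hx, hcons _ (by simp) (by simp)]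
    have hzero (i : Fin k) : x (.up 0 i, .vp 0 i) = x (.src, .up 0 i) := by
      rw [← sum_in_up_zero hx, ← sum_out_up hx, hcons _ (by simp) (by simp)]
    have hcast (j : Fin n) : Fin.ofNat (n + 1) j.val = j.castSucc :=
      Fin.ext (Nat.mod_eq_of_lt (by omega))
    have hsucc (j : Fin n) : Fin.ofNat (n + 1) (j.val + 1) = j.succ :=
      Fin.ext (Nat.mod_eq_of_lt (by omega))
    obtain ⟨φ, hφ, hM⟩ := exists_layered_paths (A := Fin N) n
      (fun j i => x (.up (Fin.ofNat (n + 1) j) i, .vp (Fin.ofNat (n + 1) j) i))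
      (fun j i i' => x (.vp (Fin.ofNat (n + 1) j) i, .up (Fin.ofNat (n + 1) (j + 1)) i'))
      (by
        rw [Fintype.card_fin, ← hsrc, sum_out_src hx]
        exact Finset.sum_congr rfl fun i _ => hzero i)
      (fun j hj i => by simpa only [← hcast, ← hsucc] using hout ⟨j, hj⟩ i)
      (fun j hj i => by simpa only [← hcast, ← hsucc] using hin ⟨j, hj⟩ i)
    replace hφ (j : Fin (n + 1)) (i : Fin k) :
        (Finset.univ.filter fun a => φ j a = i).card = x (.up j i, .vp j i) := by
      simpa using hφ j.val (by omega) i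
    have hne (a : Fin N) (j j' : Fin (n + 1)) (h : j.val + 1 = j'.val) :
        φ j.val a ≠ φ j'.val a := by
      intro heq
      have hpos : x (.vp j (φ j a), .up j' (φ j' a)) ≠ 0 := by
        have := hM j.val (by omega) (φ j a) (φ j' a)
        simp only [h, Fin.ofNat_val_eq_self] at this
        rw [← this]
        exact Finset.card_ne_zero.2 ⟨a, by simp⟩
      have hmem := not_imp_comm.1 (hx _) hpos
      rcases hmem with ⟨l, i, hl, -, h⟩ | ⟨l, i, -, h⟩ | ⟨l, l', i, b, hl, -, -, hb, h⟩ |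
        ⟨l, i, -, -, h⟩ <;>
        simp only [Prod.mk.injEq, reduceCtorEq, false_and, and_false, PNode.vp.injEq,
          PNode.up.injEq] at h
      exact hb (by rw [← h.1.2, ← h.2.2, heq])
    have hmem_list (j : Fin (n + 1)) (i : Fin k) (hpos : x (.up j i, .vp j i) ≠ 0) : i ∈ L j := by
      have hmem := not_imp_comm.1 (hx _) hpos
      rcases hmem with ⟨l, b, hl, -, h⟩ | ⟨l, b, hb, h⟩ | ⟨l, l', b, b', hl, -, -, -, h⟩ |
        ⟨l, b, -, -, h⟩ <;>
        simp only [Prod.mk.injEq, reduceCtorEq, and_false, PNode.up.injEq] at h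
      rwa [h.1.1, h.1.2]
    refine ⟨fun p => φ p.2 p.1, fun p p' h => ?_, fun p => ?_, fun i => ?_⟩
    · obtain ⟨a, j⟩ := p
      obtain ⟨a', j'⟩ := p'
      obtain ⟨-, ⟨h1, h2⟩ | ⟨h1, h2⟩⟩ := (SimpleGraph.fromRel_adj _ _ _).1 h
      · obtain rfl : a = a' := h1
        exact hne a j j' h2
      · obtain rfl : a' = a := h1
        exact (hne a' j' j h2).symm
    · refine hmem_list _ _ ?_
      rw [← hφ]
      exact Finset.card_ne_zero.2 ⟨p.1, by simp⟩
    · rw [← hη i, card_filter_prod_eq_sum]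
      simp only [hφ]
      exact (Finset.sum_filter_of_ne fun j _ => hmem_list j i).symm
end
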